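/- Let X be a complex Banach space, let 𝒩 be a non-trivial nest on X, and let n ≥ 2. A linear map L : Alg 𝒩 → B(X) is a Lie n-derivation if and only if there exist a derivation D : Alg 𝒩 → B(X) and a linear map H : Alg 𝒩 → ℂI vanishing on every (n−1)-th commutator p_n(A_1,…,A_n) with A_1,…,A_n ∈ Alg 𝒩 such that L = D + H. Moreover, if L is continuous then D and H can be chosen continuous. -/

import Mathlib

open scoped Classical

set_option synthInstance.maxHeartbeats 1000000
set_option maxHeartbeats 1000000

noncomputable section

/-- The `(n-1)`-th commutator polynomial `p_n(x_1, …, x_n)`, defined recursively by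
`p_1(x_1) = x_1` and `p_k(x_1, …, x_k) = [p_{k-1}(x_1, …, x_{k-1}), x_k]`. -/
def commPoly {A : Type*} [NonUnitalNonAssocRing A] : (n : ℕ) → (Fin n → A) → A
  | 0, _ => 0
  | 1, a => a 0
  | n + 2, a =>
      commPoly (n + 1) (fun i => a i.castSucc) * a (Fin.last (n + 1)) -
        a (Fin.last (n + 1)) * commPoly (n + 1) (fun i => a i.castSucc)

/-- A nest of closed subspaces of `X`: it contains `{0}` and `X`, is totally ordered by
inclusion, is closed under arbitrary intersections, and contains the norm-closed linear
span of the union of any subfamily. -/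
structure IsNest {X : Type*} [NormedAddCommGroup X] [NormedSpace ℂ X]
    (𝒩 : Set (Submodule ℂ X)) : Prop where
  closed : ∀ N ∈ 𝒩, IsClosed (N : Set X)
  bot_mem : (⊥ : Submodule ℂ X) ∈ 𝒩
  top_mem : (⊤ : Submodule ℂ X) ∈ 𝒩
  total : ∀ N₁ ∈ 𝒩, ∀ N₂ ∈ 𝒩, N₁ ≤ N₂ ∨ N₂ ≤ N₁
  sInf_mem : ∀ S ⊆ 𝒩, sInf S ∈ 𝒩
  closure_sSup_mem : ∀ S ⊆ 𝒩, (sSup S).topologicalClosure ∈ 𝒩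

/-- The nest algebra `Alg 𝒩` of all bounded operators leaving every member of `𝒩`
invariant. -/
def nestAlgebra {X : Type*} [NormedAddCommGroup X] [NormedSpace ℂ X]
    (𝒩 : Set (Submodule ℂ X)) : Subalgebra ℂ (X →L[ℂ] X) where
  carrier := {T : X →L[ℂ] X | ∀ N ∈ 𝒩, ∀ x ∈ N, T x ∈ N}
  mul_mem' := fun {a b} ha hb N hN x hx => ha N hN _ (hb N hN x hx)
  one_mem' := fun N _ x hx => hx
  add_mem' := fun {a b} ha hb N hN x hx => N.add_mem (ha N hN x hx) (hb N hN x hx)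
  zero_mem' := fun N _ _ _ => N.zero_mem
  algebraMap_mem' := fun r N hN x hx => by
    simpa [Algebra.algebraMap_eq_smul_one] using N.smul_mem r hx

/-- `L` is a Lie `n`-derivation on the subalgebra `𝒜` of `B`:
`L(p_n(a_1,…,a_n)) = ∑_k p_n(a_1, …, a_{k-1}, L(a_k), a_{k+1}, …, a_n)`. -/
def IsLieNDeriv {B : Type*} [Ring B] [Algebra ℂ B] (𝒜 : Subalgebra ℂ B)
    (n : ℕ) (L : ↥𝒜 →ₗ[ℂ] B) : Prop :=
  ∀ a : Fin n → ↥𝒜,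
    L (commPoly n a) =
      ∑ k : Fin n, commPoly n (Function.update (fun i => ((a i : B))) k (L (a k)))

/-- `D` is an (associative) derivation on the subalgebra `𝒜` of `B`. -/
def IsDerivOn {B : Type*} [Ring B] [Algebra ℂ B] (𝒜 : Subalgebra ℂ B)
    (D : ↥𝒜 →ₗ[ℂ] B) : Prop :=
  ∀ a b : ↥𝒜, D (a * b) = D a * (b : B) + (a : B) * D b

section RankOne

attribute [local instance] LieRing.ofAssociativeRing

variable {X : Type*} [NormedAddCommGroup X] [NormedSpace ℂ X]

/-- The operator `v ↦ f v • x`. -/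
def rankOne (x : X) (f : X →L[ℂ] ℂ) : X →L[ℂ] X := f.smulRight x

@[simp] lemma rankOne_apply (x : X) (f : X →L[ℂ] ℂ) (v : X) : rankOne x f v = f v • x := rfl

lemma mul_rankOne (A : X →L[ℂ] X) (x : X) (f : X →L[ℂ] ℂ) :
    A * rankOne x f = rankOne (A x) f := by
  ext v; simp

lemma rankOne_mul (A : X →L[ℂ] X) (x : X) (f : X →L[ℂ] ℂ) :
    rankOne x f * A = rankOne x (f.comp A) := by
  ext v; simp

lemma rankOne_mul_rankOne (x y : X) (f g : X →L[ℂ] ℂ) :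
    rankOne x f * rankOne y g = f y • rankOne x g := by
  ext v; simp [smul_smul, mul_comm]

lemma rankOne_add_left (x y : X) (f : X →L[ℂ] ℂ) :
    rankOne (x + y) f = rankOne x f + rankOne y f := by
  ext v; simp

lemma rankOne_add_right (x : X) (f g : X →L[ℂ] ℂ) :
    rankOne x (f + g) = rankOne x f + rankOne x g := by
  ext v; simp [add_smul]

lemma rankOne_sub_left (x y : X) (f : X →L[ℂ] ℂ) :
    rankOne (x - y) f = rankOne x f - rankOne y f := by
  ext v; simp [smul_sub]

lemma rankOne_sub_right (x : X) (f g : X →L[ℂ] ℂ) :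
    rankOne x (f - g) = rankOne x f - rankOne x g := by
  ext v; simp [sub_smul]

lemma rankOne_smul_left (c : ℂ) (x : X) (f : X →L[ℂ] ℂ) :
    rankOne (c • x) f = c • rankOne x f := by
  ext v; simp [smul_smul, mul_comm]

lemma rankOne_smul_right (c : ℂ) (x : X) (f : X →L[ℂ] ℂ) :
    rankOne x (c • f) = c • rankOne x f := by
  ext v; simp [smul_smul]

@[simp] lemma rankOne_zero_left (f : X →L[ℂ] ℂ) : rankOne (0 : X) f = 0 := by
  ext v; simp

@[simp] lemma rankOne_zero_right (x : X) : rankOne x (0 : X →L[ℂ] ℂ) = 0 := by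
  ext v; simp

lemma lie_operator_apply (A C : X →L[ℂ] X) (v : X) : ⁅A, C⁆ v = A (C v) - C (A v) := rfl

lemma mul_operator_apply (A C : X →L[ℂ] X) (v : X) : (A * C) v = A (C v) := rfl

/-- The operator `Y` is a scalar multiple of the identity. -/
def IsScalarOp (Y : X →L[ℂ] X) : Prop := ∃ c : ℂ, Y = c • (1 : X →L[ℂ] X)

lemma isScalarOp_zero : IsScalarOp (0 : X →L[ℂ] X) := ⟨0, by simp⟩

lemma IsScalarOp.add {Y Z : X →L[ℂ] X} (hY : IsScalarOp Y) (hZ : IsScalarOp Z) :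
    IsScalarOp (Y + Z) := by
  obtain ⟨a, rfl⟩ := hY
  obtain ⟨b, rfl⟩ := hZ
  exact ⟨a + b, by rw [add_smul]⟩

lemma IsScalarOp.smul {Y : X →L[ℂ] X} (c : ℂ) (hY : IsScalarOp Y) : IsScalarOp (c • Y) := by
  obtain ⟨a, rfl⟩ := hY
  exact ⟨c * a, by rw [smul_smul]⟩

lemma IsScalarOp.neg {Y : X →L[ℂ] X} (hY : IsScalarOp Y) : IsScalarOp (-Y) := by
  simpa using hY.smul (-1)

lemma IsScalarOp.sub {Y Z : X →L[ℂ] X} (hY : IsScalarOp Y) (hZ : IsScalarOp Z) :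
    IsScalarOp (Y - Z) := by
  rw [sub_eq_add_neg]; exact hY.add hZ.neg

lemma IsScalarOp.lie_eq_zero {Y : X →L[ℂ] X} (hY : IsScalarOp Y) (A : X →L[ℂ] X) :
    ⁅Y, A⁆ = 0 := by
  obtain ⟨a, rfl⟩ := hY
  ext v; simp [lie_operator_apply]

lemma IsScalarOp.lie_eq_zero' {Y : X →L[ℂ] X} (hY : IsScalarOp Y) (A : X →L[ℂ] X) :
    ⁅A, Y⁆ = 0 := by
  rw [← lie_skew, hY.lie_eq_zero, neg_zero]

/-- A commutator with a nonzero square-zero operator is a scalar only if it vanishes. -/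
lemma lie_eq_zero_of_isScalarOp {Y S : X →L[ℂ] X} (hS : S * S = 0)
    (h : IsScalarOp ⁅Y, S⁆) : ⁅Y, S⁆ = 0 := by
  obtain ⟨c, hc⟩ := h
  rw [Ring.lie_def] at hc
  have h1 : S * Y * S = c • S := by
    have := congrArg (fun Z => S * Z) hc
    simpa [mul_sub, ← mul_assoc, hS] using this
  have h2 : -(S * Y * S) = c • S := by
    have := congrArg (fun Z => Z * S) hc
    simpa [sub_mul, mul_assoc, hS] using this
  have h3 : c • S = 0 := by
    have : c • S = -(c • S) := by rw [← h1, h2, h1]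
    have h2 : (2 : ℂ) • (c • S) = 0 := by
      rw [two_smul]; nth_rewrite 2 [this]; exact add_neg_cancel _
    exact (smul_eq_zero.mp h2).resolve_left two_ne_zero
  rcases smul_eq_zero.mp h3 with h | h
  · rw [Ring.lie_def, hc, h, zero_smul]
  · simp [h]

end RankOne

section Defect

attribute [local instance] LieRing.ofAssociativeRing

variable {B : Type*} [Ring B]

/-- The iterated commutator of `a` with the entries of a list, the head of the list being
applied last. -/
def iterLie (a : B) : List B → B
  | [] => a
  | b :: l => ⁅iterLie a l, b⁆

@[simp] lemma iterLie_nil (a : B) : iterLie a [] = a := rfl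

@[simp] lemma iterLie_cons (a b : B) (l : List B) : iterLie a (b :: l) = ⁅iterLie a l, b⁆ := rfl

lemma iterLie_append_of_eq_zero {a : B} {l : List B} (h : iterLie a l = 0) (l' : List B) :
    iterLie a (l' ++ l) = 0 := by
  induction l' with
  | nil => simpa using h
  | cons b l' ih => simp [ih]

lemma commPoly_succ_succ (n : ℕ) (a : Fin (n + 2) → B) :
    commPoly (n + 2) a = ⁅commPoly (n + 1) (fun i => a i.castSucc), a (Fin.last (n + 1))⁆ := rfl

/-- The sum on the right-hand side of the defining identity of Lie `n`-derivations obeys the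
recursion of a commutator. -/
lemma sum_commPoly_update (n : ℕ) (a d : Fin (n + 2) → B) :
    ∑ k, commPoly (n + 2) (Function.update a k (d k)) =
      ⁅∑ k, commPoly (n + 1) (Function.update (fun i => a i.castSucc) k (d k.castSucc)),
        a (Fin.last (n + 1))⁆ +
      ⁅commPoly (n + 1) (fun i => a i.castSucc), d (Fin.last (n + 1))⁆ := by
  rw [Fin.sum_univ_castSucc]
  congr 1
  · rw [Ring.lie_def, Finset.sum_mul, Finset.mul_sum,
      ← Finset.sum_sub_distrib]
    refine Finset.sum_congr rfl fun k _ => ?_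
    rw [commPoly_succ_succ, Function.update_of_ne (Fin.castSucc_lt_last k).ne', Ring.lie_def]
    have : (fun i : Fin (n + 1) => Function.update a k.castSucc (d k.castSucc) i.castSucc) =
        Function.update (fun i => a i.castSucc) k (d k.castSucc) := by
      funext i
      by_cases h : i = k
      · subst h; simp
      · rw [Function.update_of_ne h, Function.update_of_ne
          (fun h' => h (Fin.castSucc_injective _ h'))]
    rw [this]
  · rw [commPoly_succ_succ, Function.update_self]
    have : (fun i : Fin (n + 1) => Function.update a (Fin.last (n + 1)) (d (Fin.last (n + 1)))
        i.castSucc) = fun i => a i.castSucc := by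
      funext i
      rw [Function.update_of_ne (Fin.castSucc_lt_last i).ne]
    rw [this]

lemma iterLie_append (a : B) (l l' : List B) : iterLie a (l' ++ l) = iterLie (iterLie a l) l' := by
  induction l' with
  | nil => rfl
  | cons b l' ih => simp [ih]

variable [Algebra ℂ B]

/-- The defect of `L` from being a Lie derivation, as a bilinear map. -/
def lieDefect (L : B →ₗ[ℂ] B) : B →ₗ[ℂ] B →ₗ[ℂ] B :=
  LinearMap.mk₂ ℂ (fun a b => L ⁅a, b⁆ - ⁅L a, b⁆ - ⁅a, L b⁆)
    (fun a a' b => by simp only [add_lie, map_add]; abel)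
    (fun c a b => by simp only [smul_lie, map_smul, smul_sub])
    (fun a b b' => by simp only [lie_add, map_add]; abel)
    (fun c a b => by simp only [lie_smul, map_smul, smul_sub])

lemma lieDefect_apply (L : B →ₗ[ℂ] B) (a b : B) :
    lieDefect L a b = L ⁅a, b⁆ - ⁅L a, b⁆ - ⁅a, L b⁆ := rfl

lemma lieDefect_skew (L : B →ₗ[ℂ] B) (a b : B) : lieDefect L a b = -lieDefect L b a := by
  rw [lieDefect_apply, lieDefect_apply, ← lie_skew b a, ← lie_skew (L b) a, ← lie_skew b (L a),
    map_neg]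
  abel

lemma lieDefect_self (L : B →ₗ[ℂ] B) (a : B) : lieDefect L a a = 0 := by
  rw [lieDefect_apply, lie_self, map_zero, ← lie_skew a (L a)]
  abel

/-- The defect of `L` from respecting the iterated commutator `iterLie a l`. -/
def iterDefect (L : B →ₗ[ℂ] B) (a : B) : List B → B
  | [] => 0
  | b :: l => ⁅iterDefect L a l, b⁆ + lieDefect L (iterLie a l) b

@[simp] lemma iterDefect_nil (L : B →ₗ[ℂ] B) (a : B) : iterDefect L a [] = 0 := rfl

@[simp] lemma iterDefect_cons (L : B →ₗ[ℂ] B) (a b : B) (l : List B) :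
    iterDefect L a (b :: l) = ⁅iterDefect L a l, b⁆ + lieDefect L (iterLie a l) b := rfl

lemma iterDefect_append_of_eq_zero (L : B →ₗ[ℂ] B) {a : B} {l : List B} (h : iterLie a l = 0)
    (l' : List B) : iterDefect L a (l' ++ l) = iterLie (iterDefect L a l) l' := by
  induction l' with
  | nil => simp
  | cons b l' ih => simp [ih, iterLie_append_of_eq_zero h]

/-- All iterated defects of `L` of length `m` along the subalgebra `𝒜` vanish. -/
def IterLieDeriv (𝒜 : Subalgebra ℂ B) (m : ℕ) (L : B →ₗ[ℂ] B) : Prop :=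
  ∀ a ∈ 𝒜, ∀ l : List B, (∀ b ∈ l, b ∈ 𝒜) → l.length = m → iterDefect L a l = 0

lemma lie_mem_subalgebra {𝒜 : Subalgebra ℂ B} {a b : B} (ha : a ∈ 𝒜) (hb : b ∈ 𝒜) :
    ⁅a, b⁆ ∈ 𝒜 := by
  rw [Ring.lie_def]
  exact 𝒜.sub_mem (𝒜.mul_mem ha hb) (𝒜.mul_mem hb ha)

lemma commPoly_coe (𝒜 : Subalgebra ℂ B) (n : ℕ) (a : Fin n → ↥𝒜) :
    ((commPoly n a : ↥𝒜) : B) = commPoly n (fun i => (a i : B)) := by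
  induction n with
  | zero => rfl
  | succ n ih =>
    cases n with
    | zero => rfl
    | succ n =>
      rw [commPoly_succ_succ (B := B), ← ih]
      rfl

/-- Iterated commutators and iterated defects of lists are those of tuples. -/
lemma exists_tuple_of_list (L : B →ₗ[ℂ] B) (𝒜 : Subalgebra ℂ B) {a : B} (ha : a ∈ 𝒜)
    (l : List B) (hl : ∀ b ∈ l, b ∈ 𝒜) :
    ∃ t : Fin (l.length + 1) → ↥𝒜,
      commPoly (l.length + 1) (fun i => (t i : B)) = iterLie a l ∧
      L (iterLie a l) - ∑ k, commPoly (l.length + 1)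
        (Function.update (fun i => (t i : B)) k (L (t k))) = iterDefect L a l := by
  induction l with
  | nil =>
    refine ⟨fun _ => ⟨a, ha⟩, rfl, ?_⟩
    simp [commPoly]
  | cons b l ih =>
    obtain ⟨t, h1, h2⟩ := ih fun c hc => hl c (List.mem_cons_of_mem _ hc)
    have hb : b ∈ 𝒜 := hl b List.mem_cons_self
    refine ⟨Fin.snoc (α := fun _ => ↥𝒜) t ⟨b, hb⟩, ?_, ?_⟩
    · change commPoly (l.length + 2) _ = _
      rw [commPoly_succ_succ]
      simp [h1]
    · change L _ - ∑ k : Fin (l.length + 2), commPoly (l.length + 2)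
        (Function.update _ k ((fun k => L ((Fin.snoc (α := fun _ => ↥𝒜) t ⟨b, hb⟩ :
          Fin (l.length + 2) → ↥𝒜) k : B)) k)) = _
      rw [sum_commPoly_update]
      have hlast : (Fin.snoc (α := fun _ => ↥𝒜) t ⟨b, hb⟩ : Fin (l.length + 2) → ↥𝒜)
          (Fin.last (l.length + 1)) = ⟨b, hb⟩ := Fin.snoc_last _ _
      simp only [Fin.snoc_castSucc, hlast]
      rw [h1, iterDefect_cons, ← h2, sub_lie, iterLie_cons, lieDefect_apply]
      abel

lemma IsLieNDeriv.iterLieDeriv {𝒜 : Subalgebra ℂ B} {m : ℕ} {L : ↥𝒜 →ₗ[ℂ] B}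
    (h : IsLieNDeriv 𝒜 (m + 1) L) {L' : B →ₗ[ℂ] B} (hL' : ∀ a : ↥𝒜, L' a = L a) :
    IterLieDeriv 𝒜 m L' := by
  intro a ha l hl hm
  subst hm
  obtain ⟨t, h1, h2⟩ := exists_tuple_of_list L' 𝒜 ha l hl
  rw [← h2, ← h1, ← commPoly_coe, hL', h t, sub_eq_zero]
  simp only [hL']

end Defect

section Nest

attribute [local instance] LieRing.ofAssociativeRing

variable {X : Type*} [NormedAddCommGroup X] [NormedSpace ℂ X]

/-- The annihilator of a subspace in the continuous dual. -/
def annih (N : Submodule ℂ X) : Submodule ℂ (X →L[ℂ] ℂ) where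
  carrier := {f | ∀ y ∈ N, f y = 0}
  add_mem' := fun hf hg y hy => by simp [hf y hy, hg y hy]
  zero_mem' := fun _ _ => rfl
  smul_mem' := fun c f hf y hy => by simp [hf y hy]

lemma annih_anti {M N : Submodule ℂ X} (h : M ≤ N) : annih N ≤ annih M :=
  fun _ hf y hy => hf y (h hy)

lemma exists_annih_eq_one {N : Submodule ℂ X} (hN : IsClosed (N : Set X)) {x : X} (hx : x ∉ N) :
    ∃ g ∈ annih N, g x = 1 := by
  have : IsClosed (N : Set X) := hN
  have h : N.mkQL x ≠ 0 := by
    simpa using hx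
  obtain ⟨g, hg⟩ := SeparatingDual.exists_eq_one (R := ℂ) h
  refine ⟨g.comp N.mkQL, fun y hy => ?_, by simpa using hg⟩
  have : N.mkQL y = 0 := by simpa using hy
  simp [this]

lemma mem_of_forall_annih {N : Submodule ℂ X} (hN : IsClosed (N : Set X)) {x : X}
    (h : ∀ g ∈ annih N, g x = 0) : x ∈ N := by
  by_contra hx
  obtain ⟨g, hg, hgx⟩ := exists_annih_eq_one hN hx
  rw [h g hg] at hgx
  exact zero_ne_one hgx

lemma exists_functional_eq_one {x : X} (hx : x ≠ 0) : ∃ g : X →L[ℂ] ℂ, g x = 1 :=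
  SeparatingDual.exists_eq_one hx

lemma exists_annih_apply_eq_one {N : Submodule ℂ X} (hN : IsClosed (N : Set X)) (h : N ≠ ⊤) :
    ∃ g ∈ annih N, ∃ v, g v = 1 := by
  obtain ⟨v, hv⟩ : ∃ v, v ∉ N := by
    by_contra! h'
    exact h (eq_top_iff.mpr fun v _ => h' v)
  obtain ⟨g, hg, hgv⟩ := exists_annih_eq_one hN hv
  exact ⟨g, hg, v, hgv⟩

variable {𝒩 : Set (Submodule ℂ X)}

lemma rankOne_mem_of_forall {x : X} {f : X →L[ℂ] ℂ} (h : ∀ M ∈ 𝒩, x ∈ M ∨ f ∈ annih M) :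
    rankOne x f ∈ nestAlgebra 𝒩 := by
  intro M hM y hy
  rw [rankOne_apply]
  rcases h M hM with h | h
  · exact M.smul_mem _ h
  · rw [h y hy, zero_smul]; exact M.zero_mem

lemma IsNest.rankOne_mem (h𝒩 : IsNest 𝒩) {N : Submodule ℂ X} (hN : N ∈ 𝒩) {x : X} (hx : x ∈ N)
    {f : X →L[ℂ] ℂ} (hf : f ∈ annih N) : rankOne x f ∈ nestAlgebra 𝒩 := by
  refine rankOne_mem_of_forall fun M hM => ?_
  rcases h𝒩.total N hN M hM with h | h
  · exact Or.inl (h hx)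
  · exact Or.inr (annih_anti h hf)

lemma comp_mem_annih {N : Submodule ℂ X} (hN : N ∈ 𝒩) {A : X →L[ℂ] X}
    (hA : A ∈ nestAlgebra 𝒩) {f : X →L[ℂ] ℂ} (hf : f ∈ annih N) : f.comp A ∈ annih N :=
  fun y hy => hf _ (hA N hN y hy)

lemma IsNest.exists_nontrivial (h𝒩 : IsNest 𝒩) (h : 𝒩 ≠ ({⊥, ⊤} : Set (Submodule ℂ X))) :
    ∃ N ∈ 𝒩, N ≠ ⊥ ∧ N ≠ ⊤ := by
  by_contra! h'
  refine h (Set.Subset.antisymm (fun N hN => ?_) ?_)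
  · by_cases hb : N = ⊥
    · exact Or.inl hb
    · exact Or.inr (h' N hN hb)
  · rintro N (rfl | rfl)
    · exact h𝒩.bot_mem
    · exact h𝒩.top_mem

/-- An operator commuting with a nontrivial nest algebra is scalar. -/
lemma IsNest.isScalarOp_of_commute (h𝒩 : IsNest 𝒩) {N₀ : Submodule ℂ X} (hN₀ : N₀ ∈ 𝒩)
    (hb : N₀ ≠ ⊥) (ht : N₀ ≠ ⊤) {Y : X →L[ℂ] X} (hY : ∀ A ∈ nestAlgebra 𝒩, ⁅Y, A⁆ = 0) :
    IsScalarOp Y := by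
  have hcomm : ∀ x f, rankOne x f ∈ nestAlgebra 𝒩 → ∀ v, f v • Y x = f (Y v) • x := by
    intro x f h v
    have := congrArg (fun Z : X →L[ℂ] X => Z v) (hY _ h)
    simpa [lie_operator_apply, sub_eq_zero] using this
  have key : ∀ M ∈ 𝒩, M ≠ ⊥ → M ≠ ⊤ → ∃ c : ℂ, (∀ x ∈ M, Y x = c • x) ∧
      ∀ f ∈ annih M, ∀ v, f (Y v) = c * f v := by
    intro M hM hMb hMt
    obtain ⟨f₀, hf₀, v₀, hv₀⟩ := exists_annih_apply_eq_one (h𝒩.closed M hM) hMt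
    obtain ⟨x₀, hx₀, hx₀0⟩ := M.ne_bot_iff.mp hMb
    have h1 : ∀ x ∈ M, Y x = f₀ (Y v₀) • x := fun x hx => by
      have := hcomm x f₀ (h𝒩.rankOne_mem hM hx hf₀) v₀
      rwa [hv₀, one_smul] at this
    refine ⟨f₀ (Y v₀), h1, fun f hf v => ?_⟩
    have := hcomm x₀ f (h𝒩.rankOne_mem hM hx₀ hf) v
    rw [h1 x₀ hx₀, smul_smul] at this
    rw [← smul_left_injective ℂ hx₀0 this, mul_comm]
  obtain ⟨c, hc1, -⟩ := key N₀ hN₀ hb ht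
  have hR : ∀ M ∈ 𝒩, M ≠ ⊥ → ∀ v, Y v - c • v ∈ M := by
    intro M hM hMb v
    by_cases hMt : M = ⊤
    · rw [hMt]; trivial
    obtain ⟨d, hd1, hd2⟩ := key M hM hMb hMt
    have hcd : d = c := by
      obtain ⟨x, hxM, hxN, hx0⟩ : ∃ x ∈ M, x ∈ N₀ ∧ x ≠ 0 := by
        rcases h𝒩.total M hM N₀ hN₀ with h | h
        · obtain ⟨x, hx, hx0⟩ := M.ne_bot_iff.mp hMb
          exact ⟨x, hx, h hx, hx0⟩
        · obtain ⟨x, hx, hx0⟩ := N₀.ne_bot_iff.mp hb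
          exact ⟨x, h hx, hx, hx0⟩
      exact smul_left_injective ℂ hx0 ((hd1 x hxM).symm.trans (hc1 x hxN))
    refine mem_of_forall_annih (h𝒩.closed M hM) fun f hf => ?_
    rw [map_sub, hd2 f hf, map_smul, hcd, smul_eq_mul, sub_self]
  refine ⟨c, ?_⟩
  ext v
  by_contra hv
  have hx0 : Y v - c • v ≠ 0 := fun h => hv (by simpa [sub_eq_zero] using h)
  obtain ⟨k, hk⟩ := exists_functional_eq_one hx0
  have hmem : rankOne (Y v - c • v) k ∈ nestAlgebra 𝒩 := rankOne_mem_of_forall fun M hM => by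
    by_cases hMb : M = ⊥
    · right
      intro y hy
      rw [hMb, Submodule.mem_bot] at hy
      simp [hy]
    · exact Or.inl (hR M hM hMb v)
  have h := hcomm _ _ hmem v
  rw [hc1 _ (hR N₀ hN₀ hb v), smul_smul] at h
  have h2 := smul_left_injective ℂ hx0 h
  rw [map_sub, map_smul, smul_eq_mul, ← h2, mul_comm, sub_self] at hk
  exact zero_ne_one hk

/-- An operator whose commutators with a nontrivial nest algebra are scalar is scalar. -/
lemma IsNest.isScalarOp_of_lie (h𝒩 : IsNest 𝒩) {N₀ : Submodule ℂ X} (hN₀ : N₀ ∈ 𝒩)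
    (hb : N₀ ≠ ⊥) (ht : N₀ ≠ ⊤) {Y : X →L[ℂ] X}
    (hY : ∀ A ∈ nestAlgebra 𝒩, IsScalarOp ⁅Y, A⁆) : IsScalarOp Y := by
  refine h𝒩.isScalarOp_of_commute hN₀ hb ht fun A hA => ?_
  obtain ⟨f, hf, v, hfv⟩ := exists_annih_apply_eq_one (h𝒩.closed N₀ hN₀) ht
  obtain ⟨x, hx, hx0⟩ := N₀.ne_bot_iff.mp hb
  have hS : ∀ x ∈ N₀, ⁅Y, rankOne x f⁆ = 0 := fun x hx =>
    lie_eq_zero_of_isScalarOp (by rw [rankOne_mul_rankOne, hf x hx, zero_smul])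
      (hY _ (h𝒩.rankOne_mem hN₀ hx hf))
  obtain ⟨c, hc⟩ := hY A hA
  have h1 : ⁅Y, A * rankOne x f⁆ = c • rankOne x f := by
    have : ⁅Y, A * rankOne x f⁆ = ⁅Y, A⁆ * rankOne x f + A * ⁅Y, rankOne x f⁆ := by
      simp only [Ring.lie_def]; noncomm_ring
    rw [this, hc, hS x hx]; simp
  rw [mul_rankOne, hS _ (hA N₀ hN₀ x hx)] at h1
  have h2 := congrArg (fun Z : X →L[ℂ] X => Z v) h1
  have h3 : c = 0 := by simpa [hfv, hx0] using h2.symm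
  rw [hc, h3, zero_smul]

/-- The hypercenter of a nontrivial nest algebra consists of scalars. -/
lemma IsNest.isScalarOp_of_iterLie (h𝒩 : IsNest 𝒩) {N₀ : Submodule ℂ X} (hN₀ : N₀ ∈ 𝒩)
    (hb : N₀ ≠ ⊥) (ht : N₀ ≠ ⊤) (k : ℕ) : ∀ {Y : X →L[ℂ] X},
    (∀ l : List (X →L[ℂ] X), (∀ b ∈ l, b ∈ nestAlgebra 𝒩) → l.length = k → iterLie Y l = 0) →
    IsScalarOp Y := by
  induction k with
  | zero =>
    intro Y h
    have := h [] (by simp) rfl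
    rw [iterLie_nil] at this
    rw [this]; exact isScalarOp_zero
  | succ k ih =>
    intro Y h
    refine h𝒩.isScalarOp_of_lie hN₀ hb ht fun A hA => ih fun l hl hk => ?_
    have := h (l ++ [A]) (by
      intro b hb'
      rcases List.mem_append.mp hb' with h' | h'
      · exact hl b h'
      · rw [List.mem_singleton.mp h']; exact hA) (by simp [hk])
    rwa [iterLie_append] at this

lemma IsNest.isScalarOp_lieDefect (h𝒩 : IsNest 𝒩) {N₀ : Submodule ℂ X} (hN₀ : N₀ ∈ 𝒩)
    (hb : N₀ ≠ ⊥) (ht : N₀ ≠ ⊤) {m : ℕ} (hm : 1 ≤ m) {L : (X →L[ℂ] X) →ₗ[ℂ] (X →L[ℂ] X)}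
    (hL : IterLieDeriv (nestAlgebra 𝒩) m L) {a b : X →L[ℂ] X} (ha : a ∈ nestAlgebra 𝒩)
    (hbm : b ∈ nestAlgebra 𝒩) (hab : ⁅a, b⁆ = 0) : IsScalarOp (lieDefect L a b) := by
  refine h𝒩.isScalarOp_of_iterLie hN₀ hb ht (m - 1) fun l hl hk => ?_
  have h0 : iterLie a [b] = 0 := by simpa using hab
  have := hL a ha (l ++ [b]) (by
      intro c hc
      rcases List.mem_append.mp hc with h' | h'
      · exact hl c h'
      · rw [List.mem_singleton.mp h']; exact hbm) (by simp; omega)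
  rw [iterDefect_append_of_eq_zero L h0] at this
  simpa using this

lemma IsNest.isScalarOp_lieDefect_lie (h𝒩 : IsNest 𝒩) {N₀ : Submodule ℂ X} (hN₀ : N₀ ∈ 𝒩)
    (hb : N₀ ≠ ⊥) (ht : N₀ ≠ ⊤) {m : ℕ} (hm : 1 ≤ m) {L : (X →L[ℂ] X) →ₗ[ℂ] (X →L[ℂ] X)}
    (hL : IterLieDeriv (nestAlgebra 𝒩) m L) {a b c : X →L[ℂ] X} (ha : a ∈ nestAlgebra 𝒩)
    (hbm : b ∈ nestAlgebra 𝒩) (hc : c ∈ nestAlgebra 𝒩) (habc : ⁅⁅a, b⁆, c⁆ = 0) :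
    IsScalarOp (⁅lieDefect L a b, c⁆ + lieDefect L ⁅a, b⁆ c) := by
  rcases Nat.lt_or_ge 1 m with hm1 | hm1
  · refine h𝒩.isScalarOp_of_iterLie hN₀ hb ht (m - 2) fun l hl hk => ?_
    have h0 : iterLie a [c, b] = 0 := by simpa using habc
    have := hL a ha (l ++ [c, b]) (by
        intro d hd
        simp only [List.mem_append, List.mem_cons, List.not_mem_nil, or_false] at hd
        rcases hd with h' | rfl | rfl
        · exact hl d h'
        · exact hc
        · exact hbm) (by simp; omega)
    rw [iterDefect_append_of_eq_zero L h0] at this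
    simpa using this
  · obtain rfl : m = 1 := le_antisymm hm1 hm
    have hG : ∀ a ∈ nestAlgebra 𝒩, ∀ b ∈ nestAlgebra 𝒩, lieDefect L a b = 0 := by
      intro a ha b hb
      simpa using hL a ha [b] (by simpa using hb) rfl
    rw [hG a ha b hbm, hG _ (lie_mem_subalgebra ha hbm) c hc]
    simpa using isScalarOp_zero

end Nest

section GoodPair

attribute [local instance] LieRing.ofAssociativeRing

variable {X : Type*} [NormedAddCommGroup X] [NormedSpace ℂ X]

/-- A linear map for which every vector of a subspace is an eigenvector is scalar there. -/
lemma exists_smul_of_forall_mem_exists_smul (T : X →ₗ[ℂ] X) (K : Submodule ℂ X)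
    (h : ∀ x ∈ K, ∃ c : ℂ, T x = c • x) : ∃ c : ℂ, ∀ x ∈ K, T x = c • x := by
  by_cases hK : K = ⊥
  · refine ⟨0, fun x hx => ?_⟩
    rw [hK, Submodule.mem_bot] at hx
    simp [hx]
  obtain ⟨x₀, hx₀, h0⟩ := K.ne_bot_iff.mp hK
  obtain ⟨c, hc⟩ := h x₀ hx₀
  refine ⟨c, fun x hx => ?_⟩
  obtain ⟨d, hd⟩ := h x hx
  obtain ⟨e, he⟩ := h (x + x₀) (K.add_mem hx hx₀)
  rw [map_add, hd, hc, smul_add] at he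
  have h1 : (d - e) • x = (e - c) • x₀ := by
    rw [sub_smul, sub_smul, sub_eq_sub_iff_add_eq_add, he]; abel
  by_cases hde : d = e
  · subst hde
    rw [sub_self, zero_smul] at h1
    rcases smul_eq_zero.mp h1.symm with h2 | h2
    · rw [hd, sub_eq_zero.mp h2]
    · exact absurd h2 h0
  · have h2 : x = ((d - e)⁻¹ * (e - c)) • x₀ := by
      rw [mul_smul, ← h1, smul_smul, inv_mul_cancel₀ (sub_ne_zero.mpr hde), one_smul]
    rw [h2, map_smul, hc, smul_comm]

/-- The defect of `D` from being a derivation. -/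
def derDefect (D : (X →L[ℂ] X) →ₗ[ℂ] (X →L[ℂ] X)) (A B : X →L[ℂ] X) : X →L[ℂ] X :=
  D (A * B) - D A * B - A * D B

/-- The vector `L A x - t (A x) + A (t x)`, where `t y = L (y ⊗ f) v`. -/
def symbolVec (L : (X →L[ℂ] X) →ₗ[ℂ] (X →L[ℂ] X)) (f : X →L[ℂ] ℂ) (v : X)
    (A : X →L[ℂ] X) (x : X) : X :=
  L A x - L (rankOne (A x) f) v + A (L (rankOne x f) v)

/-- A pair `K ≤ N` of members of the nest such that `L` behaves like a Lie derivation on the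
operators `x ⊗ f` with `x ∈ K` and `f` annihilating `N`, and maps them to operators sending the
kernel of `f` to the span of `x`. -/
structure IsGoodPair (𝒩 : Set (Submodule ℂ X)) (L : (X →L[ℂ] X) →ₗ[ℂ] (X →L[ℂ] X))
    (K N : Submodule ℂ X) : Prop where
  mem_left : K ∈ 𝒩
  mem_right : N ∈ 𝒩
  le : K ≤ N
  ne_bot : K ≠ ⊥
  ne_top : N ≠ ⊤
  defect : ∀ A ∈ nestAlgebra 𝒩, ∀ x ∈ K, ∀ f ∈ annih N, lieDefect L A (rankOne x f) = 0
  eigen : ∀ x ∈ K, ∀ f ∈ annih N, ∀ v, f v = 0 → ∃ c : ℂ, L (rankOne x f) v = c • x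

variable {𝒩 : Set (Submodule ℂ X)} {L : (X →L[ℂ] X) →ₗ[ℂ] (X →L[ℂ] X)} {K N : Submodule ℂ X}

lemma IsGoodPair.exists_form (h : IsGoodPair 𝒩 L K N) {f₀ : X →L[ℂ] ℂ} (hf₀ : f₀ ∈ annih N)
    {v₀ : X} (hv₀ : f₀ v₀ = 1) :
    ∃ s : (X →L[ℂ] ℂ) → X → ℂ, ∀ f ∈ annih N, ∀ v, ∀ x ∈ K,
      L (rankOne x f) v = f v • L (rankOne x f₀) v₀ + s f v • x := by
  have h1 : ∀ x ∈ K, ∀ v, ∃ c : ℂ, L (rankOne x f₀) v = f₀ v • L (rankOne x f₀) v₀ + c • x := by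
    intro x hx v
    obtain ⟨c, hc⟩ := h.eigen x hx f₀ hf₀ (v - f₀ v • v₀) (by simp [hv₀])
    refine ⟨c, ?_⟩
    rw [← hc, map_sub, map_smul]; abel
  have h2 : ∀ x ∈ K, ∀ f ∈ annih N, ∀ u, f₀ u = 1 →
      ∃ c : ℂ, L (rankOne x f) u = f u • L (rankOne x f₀) v₀ + c • x := by
    intro x hx f hf u hu
    obtain ⟨c, hc⟩ := h.eigen x hx (f - f u • f₀)
      (sub_mem hf ((annih N).smul_mem _ hf₀)) u (by simp [hu])
    obtain ⟨d, hd⟩ := h1 x hx u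
    refine ⟨c + f u * d, ?_⟩
    rw [rankOne_sub_right, rankOne_smul_right, map_sub, map_smul, sub_apply,
      smul_apply, sub_eq_iff_eq_add, hd, hu, one_smul] at hc
    rw [hc]; module
  have h3 : ∀ x ∈ K, ∀ f ∈ annih N, ∀ v,
      ∃ c : ℂ, L (rankOne x f) v - f v • L (rankOne x f₀) v₀ = c • x := by
    intro x hx f hf v
    obtain ⟨c, hc⟩ := h2 x hx f hf (v + (1 - f₀ v) • v₀) (by simp [hv₀])
    obtain ⟨d, hd⟩ := h2 x hx f hf v₀ hv₀
    refine ⟨c - (1 - f₀ v) * d, ?_⟩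
    rw [map_add, map_smul, hd, map_add, map_smul, ← eq_sub_iff_add_eq] at hc
    rw [hc, smul_eq_mul]; module
  have h4 : ∀ f v, ∃ c : ℂ, f ∈ annih N → ∀ x ∈ K,
      L (rankOne x f) v = f v • L (rankOne x f₀) v₀ + c • x := by
    intro f v
    by_cases hf : f ∈ annih N
    · let T : X →ₗ[ℂ] X :=
        { toFun := fun x => L (rankOne x f) v - f v • L (rankOne x f₀) v₀
          map_add' := fun x y => by
            simp only [rankOne_add_left, map_add, add_apply]; module
          map_smul' := fun c x => by
            simp only [rankOne_smul_left, map_smul, smul_apply,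
              RingHom.id_apply]; module }
      obtain ⟨c, hc⟩ := exists_smul_of_forall_mem_exists_smul T K fun x hx => h3 x hx f hf v
      exact ⟨c, fun _ x hx => by
        rw [← hc x hx]; exact (add_sub_cancel (f v • L (rankOne x f₀) v₀) _).symm⟩
    · exact ⟨0, fun h => absurd h hf⟩
  choose s hs using h4
  exact ⟨s, fun f hf v x hx => hs f v hf x hx⟩

lemma IsGoodPair.exists_symbol (h : IsGoodPair 𝒩 L K N) {f₀ : X →L[ℂ] ℂ} (hf₀ : f₀ ∈ annih N)
    {v₀ : X} (hv₀ : f₀ v₀ = 1) :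
    ∃ s : (X →L[ℂ] ℂ) → X → ℂ, ∀ A ∈ nestAlgebra 𝒩, ∃ c : ℂ,
      (∀ x ∈ K, symbolVec L f₀ v₀ A x = c • x) ∧
      ∀ f ∈ annih N, ∀ v, f (L A v) = c * f v + s (f.comp A) v - s f (A v) := by
  obtain ⟨s, hs⟩ := h.exists_form hf₀ hv₀
  refine ⟨s, fun A hA => ?_⟩
  have key : ∀ f ∈ annih N, ∀ v, ∀ x ∈ K, f v • symbolVec L f₀ v₀ A x =
      (f (L A v) + s f (A v) - s (f.comp A) v) • x := by
    intro f hf v x hx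
    have h1 := congrArg (fun Z : X →L[ℂ] X => Z v) (h.defect A hA x hx f hf)
    rw [lieDefect_apply, Ring.lie_def, mul_rankOne, rankOne_mul] at h1
    simp only [map_sub, sub_apply, lie_operator_apply, rankOne_apply,
      zero_apply, map_smul] at h1
    rw [hs f hf v _ (h.mem_left |> fun hK => hA K hK x hx),
      hs _ (comp_mem_annih h.mem_right hA hf) v x hx, hs f hf v x hx, hs f hf (A v) x hx] at h1
    simp only [map_add, map_smul, ContinuousLinearMap.comp_apply] at h1
    rw [symbolVec, ← sub_eq_zero, ← neg_eq_zero, ← h1]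
    module
  refine ⟨f₀ (L A v₀) + s f₀ (A v₀) - s (f₀.comp A) v₀, ?_, ?_⟩
  · intro x hx
    rw [← key f₀ hf₀ v₀ x hx, hv₀, one_smul]
  · intro f hf v
    obtain ⟨x, hx, hx0⟩ := K.ne_bot_iff.mp h.ne_bot
    have h1 := key f hf v x hx
    have h2 := key f₀ hf₀ v₀ x hx
    rw [hv₀, one_smul] at h2
    rw [h2, smul_smul] at h1
    have h3 := smul_left_injective ℂ hx0 h1
    linear_combination -h3

lemma IsGoodPair.derDefect_eq (h : IsGoodPair 𝒩 L K N) {f₀ : X →L[ℂ] ℂ} (hf₀ : f₀ ∈ annih N)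
    {v₀ : X} (hv₀ : f₀ v₀ = 1) {φ : (X →L[ℂ] X) →ₗ[ℂ] ℂ} {x₀ : X} (hx₀ : x₀ ∈ K) (h0 : x₀ ≠ 0)
    (hφ : ∀ A ∈ nestAlgebra 𝒩, symbolVec L f₀ v₀ A x₀ = φ A • x₀) {A B : X →L[ℂ] X}
    (hA : A ∈ nestAlgebra 𝒩) (hB : B ∈ nestAlgebra 𝒩) :
    (∀ x ∈ K, derDefect (L - φ.smulRight (1 : X →L[ℂ] X)) A B x = 0) ∧
    ∀ f ∈ annih N, ∀ v, f (derDefect (L - φ.smulRight (1 : X →L[ℂ] X)) A B v) = 0 := by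
  obtain ⟨s, hs⟩ := h.exists_symbol hf₀ hv₀
  have key : ∀ A ∈ nestAlgebra 𝒩, (∀ x ∈ K, symbolVec L f₀ v₀ A x = φ A • x) ∧
      ∀ f ∈ annih N, ∀ v, f (L A v) = φ A * f v + s (f.comp A) v - s f (A v) := by
    intro A hA
    obtain ⟨c, hc1, hc2⟩ := hs A hA
    have : c = φ A := smul_left_injective ℂ h0 ((hc1 x₀ hx₀).symm.trans (hφ A hA))
    exact this ▸ ⟨hc1, hc2⟩
  have hAB := (nestAlgebra 𝒩).mul_mem hA hB
  constructor
  · intro x hx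
    have e : ∀ A ∈ nestAlgebra 𝒩, ∀ x ∈ K, L A x = φ A • x + L (rankOne (A x) f₀) v₀ -
        A (L (rankOne x f₀) v₀) := fun A hA x hx => by
      rw [← (key A hA).1 x hx, symbolVec]; abel
    simp only [derDefect, LinearMap.sub_apply, LinearMap.smulRight_apply,
      sub_apply, smul_apply,
      one_apply_eq_self, mul_operator_apply]
    rw [e _ hAB x hx, e A hA _ (hB K h.mem_left x hx), e B hB x hx]
    simp only [mul_operator_apply, map_sub, map_add, map_smul]
    abel
  · intro f hf v
    have hfA := comp_mem_annih h.mem_right hA hf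
    have e1 := (key _ hAB).2 f hf v
    have e2 := (key _ hA).2 f hf (B v)
    have e3 := (key _ hB).2 _ hfA v
    have e4 : f.comp (A * B) = (f.comp A).comp B := rfl
    rw [e4] at e1
    simp only [derDefect, LinearMap.sub_apply, LinearMap.smulRight_apply,
      sub_apply, smul_apply,
      one_apply_eq_self, mul_operator_apply, map_sub, map_smul,
      smul_eq_mul, ContinuousLinearMap.comp_apply] at e1 e2 e3 ⊢
    linear_combination e1 - e2 - e3

end GoodPair

section Peirce

attribute [local instance] LieRing.ofAssociativeRing

variable {B : Type*} [Ring B] [Algebra ℂ B]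

lemma iterLie_replicate {S e : B} {c : ℂ} (hS : ⁅S, e⁆ = c • S) (j : ℕ) :
    iterLie S (List.replicate j e) = c ^ j • S := by
  induction j with
  | zero => simp
  | succ j ih =>
    rw [List.replicate_succ, iterLie_cons, ih, Ring.lie_def, smul_mul_assoc, mul_smul_comm,
      ← smul_sub, ← Ring.lie_def, hS, smul_smul, pow_succ]

lemma mul_iterDefect_replicate_mul_of_lie_eq_zero (L : B →ₗ[ℂ] B) {S e U V : B} {c : ℂ}
    (hS : ⁅S, e⁆ = c • S) (hUV : ∀ Z : B, U * ⁅Z, e⁆ * V = 0) (j : ℕ) :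
    U * iterDefect L S (List.replicate (j + 1) e) * V = c ^ j • (U * lieDefect L S e * V) := by
  rw [List.replicate_succ, iterDefect_cons, iterLie_replicate hS, mul_add, add_mul, hUV, zero_add,
    map_smul, LinearMap.smul_apply, mul_smul_comm, smul_mul_assoc]

lemma mul_iterDefect_replicate_mul (L : B →ₗ[ℂ] B) {S e U V : B} {c : ℂ}
    (hS : ⁅S, e⁆ = c • S) (hUV : ∀ Z : B, U * ⁅Z, e⁆ * V = c • (U * Z * V)) (j : ℕ) :
    U * iterDefect L S (List.replicate (j + 1) e) * V =
      (((j : ℂ) + 1) * c ^ j) • (U * lieDefect L S e * V) := by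
  induction j with
  | zero => simp
  | succ j ih =>
    rw [List.replicate_succ, iterDefect_cons, iterLie_replicate hS, mul_add, add_mul, hUV, ih,
      map_smul, LinearMap.smul_apply, mul_smul_comm, smul_mul_assoc]
    push_cast
    module

lemma iterDefect_replicate_eq_zero (L : B →ₗ[ℂ] B) {S e : B} {c : ℂ}
    (hS : ⁅S, e⁆ = c • S) (hG : lieDefect L S e = 0) (j : ℕ) :
    iterDefect L S (List.replicate j e) = 0 := by
  induction j with
  | zero => simp
  | succ j ih =>
    rw [List.replicate_succ, iterDefect_cons, ih, iterLie_replicate hS, map_smul,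
      LinearMap.smul_apply, hG]
    simp

end Peirce

section MinimalElement

attribute [local instance] LieRing.ofAssociativeRing

variable {X : Type*} [NormedAddCommGroup X] [NormedSpace ℂ X]
variable {𝒩 : Set (Submodule ℂ X)} {K : Submodule ℂ X}
  {L : (X →L[ℂ] X) →ₗ[ℂ] (X →L[ℂ] X)} {m : ℕ}

/-- `K` is the smallest nonzero member of the nest `𝒩`, and is proper. -/
structure IsNestAtom (𝒩 : Set (Submodule ℂ X)) (K : Submodule ℂ X) : Prop where
  isNest : IsNest 𝒩
  mem : K ∈ 𝒩
  ne_bot : K ≠ ⊥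
  ne_top : K ≠ ⊤
  le : ∀ M ∈ 𝒩, M ≠ ⊥ → K ≤ M

lemma IsNestAtom.rankOne_mem (hK : IsNestAtom 𝒩 K) {y : X} (hy : y ∈ K) (g : X →L[ℂ] ℂ) :
    rankOne y g ∈ nestAlgebra 𝒩 := by
  refine rankOne_mem_of_forall fun M hM => ?_
  by_cases hMb : M = ⊥
  · right
    intro x hx
    rw [hMb, Submodule.mem_bot] at hx
    rw [hx, map_zero]
  · exact Or.inl (hK.le M hM hMb hy)

lemma IterLieDeriv.replicate {𝒜 : Subalgebra ℂ (X →L[ℂ] X)} (hL : IterLieDeriv 𝒜 m L)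
    {a b : X →L[ℂ] X} (ha : a ∈ 𝒜) (hb : b ∈ 𝒜) : iterDefect L a (List.replicate m b) = 0 :=
  hL a ha _ (fun c hc => by rw [List.eq_of_mem_replicate hc]; exact hb) (by simp)

lemma IsNestAtom.lieDefect_row (hK : IsNestAtom 𝒩 K) (hm : 1 ≤ m)
    (hL : IterLieDeriv (nestAlgebra 𝒩) m L) {y : X} (hy : y ∈ K) {g k : X →L[ℂ] ℂ}
    (hg : g y = 1) (hk : k y = 0) : lieDefect L (rankOne y k) (rankOne y g) = 0 := by
  set e := rankOne y g with he
  set S := rankOne y k with hS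
  have hem : e ∈ nestAlgebra 𝒩 := hK.rankOne_mem hy g
  have hSm : S ∈ nestAlgebra 𝒩 := hK.rankOne_mem hy k
  have hee : e * e = e := by rw [he, rankOne_mul_rankOne, hg, one_smul]
  have hSe : S * e = 0 := by rw [he, hS, rankOne_mul_rankOne, hk, zero_smul]
  have heS : e * S = S := by rw [he, hS, rankOne_mul_rankOne, hg, one_smul]
  have hlie : ⁅S, e⁆ = (-1 : ℂ) • S := by rw [Ring.lie_def, hSe, heS]; simp
  have hz := hL.replicate hSm hem
  obtain ⟨j, rfl⟩ : ∃ j, m = j + 1 := ⟨m - 1, by omega⟩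
  have h11 := mul_iterDefect_replicate_mul_of_lie_eq_zero L (U := e) (V := e) hlie
    (fun Z => by rw [Ring.lie_def, mul_sub, sub_mul, ← mul_assoc, ← mul_assoc, hee, mul_assoc,
      mul_assoc, mul_assoc, hee, sub_self]) j
  have h22 := mul_iterDefect_replicate_mul_of_lie_eq_zero L (U := 1 - e) (V := 1 - e) hlie
    (fun Z => by
      have h1 : (1 - e) * ⁅Z, e⁆ * (1 - e) =
        (1 - e) * Z * (e - e * e) - (e - e * e) * Z * (1 - e) := by
        rw [Ring.lie_def]; noncomm_ring
      rw [h1, hee, sub_self]; simp) j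
  have h12 := mul_iterDefect_replicate_mul L (U := e) (V := 1 - e) hlie
    (fun Z => by
      have h1 : e * ⁅Z, e⁆ * (1 - e) = e * Z * (e - e * e) - (e * e) * Z * (1 - e) := by
        rw [Ring.lie_def]; noncomm_ring
      rw [h1, hee, sub_self]; simp) j
  rw [hz] at h11 h22 h12
  set G := lieDefect L S e with hG
  have hj : ((j : ℂ) + 1) * (-1) ^ j ≠ 0 :=
    mul_ne_zero (by exact_mod_cast Nat.succ_ne_zero j) (pow_ne_zero _ (by norm_num))
  have hj' : ((-1 : ℂ)) ^ j ≠ 0 := pow_ne_zero _ (by norm_num)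
  have g11 : e * G * e = 0 := by simpa [hj'] using h11.symm
  have g22 : (1 - e) * G * (1 - e) = 0 := by simpa [hj'] using h22.symm
  have g12 : e * G * (1 - e) = 0 := by
    rw [mul_zero, zero_mul] at h12
    exact (smul_eq_zero.mp h12.symm).resolve_left hj
  have geG : e * G = 0 := by
    calc e * G = e * G * e + e * G * (1 - e) := by noncomm_ring
      _ = 0 := by rw [g11, g12, add_zero]
  have gG : G = G * e := by
    have : (1 - e) * G * (1 - e) = G - G * e - e * G + e * G * e := by noncomm_ring
    rw [g22, geG, zero_mul] at this
    rw [eq_comm, ← sub_eq_zero, ← neg_eq_zero]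
    simpa using this.symm
  have hF := hK.isNest.isScalarOp_lieDefect_lie hK.mem hK.ne_bot hK.ne_top hm hL hSm hem hSm
    (by rw [hlie, smul_lie, lie_self, smul_zero])
  rw [hlie, map_smul, LinearMap.smul_apply, lieDefect_self, smul_zero, add_zero, ← hG] at hF
  have hGS := lie_eq_zero_of_isScalarOp (by rw [hS, rankOne_mul_rankOne, hk, zero_smul]) hF
  rw [Ring.lie_def, sub_eq_zero] at hGS
  have hSG : S * G = 0 := by rw [← heS, mul_assoc, ← hGS, ← mul_assoc, geG, zero_mul]
  rw [hSG] at hGS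
  by_cases hk0 : k = 0
  · rw [hG, hS, hk0, rankOne_zero_right, map_zero, LinearMap.zero_apply]
  · obtain ⟨v, hv⟩ : ∃ v, k v ≠ 0 := by
      by_contra! h
      exact hk0 (ContinuousLinearMap.ext h)
    have hGy : G y = 0 := by
      have := congrArg (fun Z : X →L[ℂ] X => Z v) hGS
      simpa [hS, hv, mul_operator_apply] using this
    rw [gG, he, mul_rankOne, hGy, rankOne_zero_left]

lemma IsNestAtom.lieDefect_column (hK : IsNestAtom 𝒩 K) (hm : 1 ≤ m)
    (hL : IterLieDeriv (nestAlgebra 𝒩) m L) {y z : X} (hy : y ∈ K) (hz : z ∈ K) {g : X →L[ℂ] ℂ}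
    (hg : g y = 1) (hgz : g z = 0) : lieDefect L (rankOne z g) (rankOne y g) = 0 := by
  set e := rankOne y g with he
  set S := rankOne z g with hS
  have hem : e ∈ nestAlgebra 𝒩 := hK.rankOne_mem hy g
  have hSm : S ∈ nestAlgebra 𝒩 := hK.rankOne_mem hz g
  have hee : e * e = e := by rw [he, rankOne_mul_rankOne, hg, one_smul]
  have hSe : S * e = S := by rw [he, hS, rankOne_mul_rankOne, hg, one_smul]
  have heS : e * S = 0 := by rw [he, hS, rankOne_mul_rankOne, hgz, zero_smul]
  have hlie : ⁅S, e⁆ = (1 : ℂ) • S := by rw [Ring.lie_def, hSe, heS]; simp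
  have hz := hL.replicate hSm hem
  obtain ⟨j, rfl⟩ : ∃ j, m = j + 1 := ⟨m - 1, by omega⟩
  have h11 := mul_iterDefect_replicate_mul_of_lie_eq_zero L (U := e) (V := e) hlie
    (fun Z => by rw [Ring.lie_def, mul_sub, sub_mul, ← mul_assoc, ← mul_assoc, hee, mul_assoc,
      mul_assoc, mul_assoc, hee, sub_self]) j
  have h22 := mul_iterDefect_replicate_mul_of_lie_eq_zero L (U := 1 - e) (V := 1 - e) hlie
    (fun Z => by
      have h1 : (1 - e) * ⁅Z, e⁆ * (1 - e) =
        (1 - e) * Z * (e - e * e) - (e - e * e) * Z * (1 - e) := by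
        rw [Ring.lie_def]; noncomm_ring
      rw [h1, hee, sub_self]; simp) j
  have h21 := mul_iterDefect_replicate_mul L (U := 1 - e) (V := e) hlie
    (fun Z => by
      have h1 : (1 - e) * ⁅Z, e⁆ * e = (1 - e) * Z * (e * e) - (e - e * e) * Z * e := by
        rw [Ring.lie_def]; noncomm_ring
      rw [h1, hee, sub_self]; simp) j
  rw [hz] at h11 h22 h21
  set G := lieDefect L S e with hG
  have hj : ((j : ℂ) + 1) * 1 ^ j ≠ 0 :=
    mul_ne_zero (by exact_mod_cast Nat.succ_ne_zero j) (by simp)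
  have g11 : e * G * e = 0 := by simpa using h11.symm
  have g22 : (1 - e) * G * (1 - e) = 0 := by simpa using h22.symm
  have g21 : (1 - e) * G * e = 0 := by
    rw [mul_zero, zero_mul] at h21
    exact (smul_eq_zero.mp h21.symm).resolve_left hj
  have gGe : G * e = 0 := by
    calc G * e = e * G * e + (1 - e) * G * e := by noncomm_ring
      _ = 0 := by rw [g11, g21, add_zero]
  have gG : G = e * G := by
    have : (1 - e) * G * (1 - e) = G - G * e - e * G + e * (G * e) := by noncomm_ring
    rw [g22, gGe] at this
    rw [eq_comm, ← sub_eq_zero, ← neg_eq_zero]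
    simpa using this.symm
  have hF := hK.isNest.isScalarOp_lieDefect_lie hK.mem hK.ne_bot hK.ne_top hm hL hSm hem hSm
    (by rw [hlie, smul_lie, lie_self, smul_zero])
  rw [hlie, map_smul, LinearMap.smul_apply, lieDefect_self, smul_zero, add_zero, ← hG] at hF
  have hGS := lie_eq_zero_of_isScalarOp (by rw [hS, rankOne_mul_rankOne, hgz, zero_smul]) hF
  rw [Ring.lie_def, sub_eq_zero] at hGS
  have hGS0 : G * S = 0 := by
    rw [← hSe, ← mul_assoc, hGS, mul_assoc, gGe, mul_zero]
  rw [hGS0] at hGS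
  by_cases hz0 : z = 0
  · rw [hG, hS, hz0, rankOne_zero_left, map_zero, LinearMap.zero_apply]
  · ext v
    have : g (G v) = 0 := by
      have := congrArg (fun Z : X →L[ℂ] X => Z v) hGS
      simpa [hS, hz0, mul_operator_apply] using this.symm
    rw [gG, mul_operator_apply, he, rankOne_apply, this, zero_smul, zero_apply]

lemma IsNestAtom.isScalarOp_lieDefect (hK : IsNestAtom 𝒩 K) (hm : 1 ≤ m)
    (hL : IterLieDeriv (nestAlgebra 𝒩) m L) {y : X} (hy : y ∈ K) {g : X →L[ℂ] ℂ}
    (hg : g y = 1) {A : X →L[ℂ] X} (hA : A ∈ nestAlgebra 𝒩) :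
    IsScalarOp (lieDefect L A (rankOne y g)) := by
  set k : X →L[ℂ] ℂ := g.comp A - g (A y) • g with hk
  set z : X := A y - g (A y) • y with hz
  have hky : k y = 0 := by simp [hk, hg]
  have hzK : z ∈ K := K.sub_mem (hA K hK.mem y hy) (K.smul_mem _ hy)
  have hgz : g z = 0 := by simp [hz, hg]
  set C := A - rankOne y k - rankOne z g with hC
  have hCm : C ∈ nestAlgebra 𝒩 :=
    sub_mem (sub_mem hA (hK.rankOne_mem hy k)) (hK.rankOne_mem hzK g)
  have hcomm : ⁅C, rankOne y g⁆ = 0 := by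
    ext v
    simp only [hC, hz, hk, lie_operator_apply, rankOne_apply, sub_apply, map_sub, map_smul, hg,
      smul_apply, ContinuousLinearMap.comp_apply, smul_eq_mul, zero_apply]
    module
  have hAC : A = C + rankOne y k + rankOne z g := by rw [hC]; abel
  have := hK.isNest.isScalarOp_lieDefect hK.mem hK.ne_bot hK.ne_top hm hL hCm
    (hK.rankOne_mem hy g) hcomm
  rw [hAC, map_add, map_add, LinearMap.add_apply, LinearMap.add_apply,
    hK.lieDefect_row hm hL hy hg hky, hK.lieDefect_column hm hL hy hzK hg hgz, add_zero, add_zero]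
  exact this

lemma IsNestAtom.isGoodPair (hK : IsNestAtom 𝒩 K) (hm : 1 ≤ m)
    (hL : IterLieDeriv (nestAlgebra 𝒩) m L) : IsGoodPair 𝒩 L K K where
  mem_left := hK.mem
  mem_right := hK.mem
  le := le_rfl
  ne_bot := hK.ne_bot
  ne_top := hK.ne_top
  defect := by
    intro A hA x hx f hf
    by_cases hx0 : x = 0
    · rw [hx0, rankOne_zero_left, map_zero]
    obtain ⟨g, hg⟩ := exists_functional_eq_one hx0
    have hfx : f x = 0 := hf x hx
    have hlie : ⁅rankOne x f, rankOne x g⁆ = (-1 : ℂ) • rankOne x f := by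
      rw [Ring.lie_def, rankOne_mul_rankOne, rankOne_mul_rankOne, hg, hfx]; simp
    have h := hL (rankOne x f) (hK.rankOne_mem hx f)
      (A :: List.replicate (m - 1) (rankOne x g)) (by
        intro c hc
        rcases List.mem_cons.mp hc with rfl | hc
        · exact hA
        · rw [List.eq_of_mem_replicate hc]; exact hK.rankOne_mem hx g) (by simp; omega)
    rw [iterDefect_cons, iterDefect_replicate_eq_zero L hlie (hK.lieDefect_row hm hL hx hg hfx),
      iterLie_replicate hlie, zero_lie, zero_add, map_smul, LinearMap.smul_apply] at h
    rw [lieDefect_skew, (smul_eq_zero.mp h).resolve_left (pow_ne_zero _ (by norm_num)), neg_zero]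
  eigen := by
    intro x hx f hf v hv
    by_cases hx0 : x = 0
    · exact ⟨0, by simp [hx0]⟩
    obtain ⟨g, hg⟩ := exists_functional_eq_one hx0
    have hfx : f x = 0 := hf x hx
    have h := hK.lieDefect_row hm hL hx hg hfx
    have hlie : ⁅rankOne x f, rankOne x g⁆ = -rankOne x f := by
      rw [Ring.lie_def, rankOne_mul_rankOne, rankOne_mul_rankOne, hg, hfx]; simp
    rw [lieDefect_apply, hlie, map_neg] at h
    set φ := L (rankOne x f)
    have key : ∀ w, φ w = -(φ (rankOne x g w)) + rankOne x g (φ w) -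
        (rankOne x f (L (rankOne x g) w) - L (rankOne x g) (rankOne x f w)) := by
      intro w
      have h1 := congrArg (fun Z : X →L[ℂ] X => Z w) h
      simp only [sub_apply, neg_apply, lie_operator_apply, zero_apply] at h1
      rw [← sub_eq_zero, ← neg_eq_zero, ← h1]; abel
    simp only [rankOne_apply, map_smul] at key
    have h1 := key x
    rw [hg, hfx] at h1
    obtain ⟨c, h2⟩ : ∃ c : ℂ, φ x = c • x := by
      refine ⟨(2 : ℂ)⁻¹ * (g (φ x) - f (L (rankOne x g) x)), ?_⟩
      rw [mul_smul, eq_inv_smul_iff₀ two_ne_zero, two_smul]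
      nth_rewrite 1 [h1]
      module
    refine ⟨-(g v * c) + g (φ v) - f (L (rankOne x g) v), (key v).trans ?_⟩
    rw [hv, h2]
    module

end MinimalElement

section DerDefect

attribute [local instance] LieRing.ofAssociativeRing

variable {X : Type*} [NormedAddCommGroup X] [NormedSpace ℂ X]
  (D : (X →L[ℂ] X) →ₗ[ℂ] (X →L[ℂ] X))

lemma derDefect_sub_left (A A' B : X →L[ℂ] X) :
    derDefect D (A - A') B = derDefect D A B - derDefect D A' B := by
  simp only [derDefect, sub_mul, map_sub]; abel

lemma derDefect_smul_left (c : ℂ) (A B : X →L[ℂ] X) :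
    derDefect D (c • A) B = c • derDefect D A B := by
  simp only [derDefect, smul_mul_assoc, map_smul, smul_sub]

lemma derDefect_add_right (A B B' : X →L[ℂ] X) :
    derDefect D A (B + B') = derDefect D A B + derDefect D A B' := by
  simp only [derDefect, mul_add, map_add]; abel

lemma derDefect_smul_right (c : ℂ) (A B : X →L[ℂ] X) :
    derDefect D A (c • B) = c • derDefect D A B := by
  simp only [derDefect, mul_smul_comm, map_smul, smul_sub]

lemma derDefect_zero_right (A : X →L[ℂ] X) : derDefect D A 0 = 0 := by
  simp [derDefect]

/-- The defect from being a derivation is a Hochschild cocycle. -/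
lemma derDefect_cocycle (A B C : X →L[ℂ] X) :
    A * derDefect D B C - derDefect D (A * B) C + derDefect D A (B * C) - derDefect D A B * C =
      0 := by
  simp only [derDefect, mul_assoc]
  noncomm_ring

lemma derDefect_sub_derDefect (A B : X →L[ℂ] X) :
    derDefect D A B - derDefect D B A = lieDefect D A B := by
  simp only [derDefect, lieDefect_apply, Ring.lie_def, map_sub]; abel

variable {D}

variable {𝒩 : Set (Submodule ℂ X)} {K : Submodule ℂ X}

lemma IsNestAtom.derDefect_eq_zero_of (hK : IsNestAtom 𝒩 K)
    (h1 : ∀ A ∈ nestAlgebra 𝒩, ∀ B ∈ nestAlgebra 𝒩, ∀ x ∈ K, derDefect D A B x = 0)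
    (h2 : ∀ A ∈ nestAlgebra 𝒩, ∀ B ∈ nestAlgebra 𝒩, ∀ v, derDefect D A B v ∈ K)
    (h3 : ∀ y ∈ K, ∀ g : X →L[ℂ] ℂ, g y = 1 → ∀ A ∈ nestAlgebra 𝒩,
      IsScalarOp (lieDefect D A (rankOne y g)))
    {A B : X →L[ℂ] X} (hA : A ∈ nestAlgebra 𝒩) (hB : B ∈ nestAlgebra 𝒩) :
    derDefect D A B = 0 := by
  have hright : ∀ A ∈ nestAlgebra 𝒩, ∀ B ∈ nestAlgebra 𝒩, ∀ y ∈ K, ∀ g : X →L[ℂ] ℂ,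
      derDefect D A B * rankOne y g = 0 := by
    intro A hA B hB y hy g
    rw [mul_rankOne, h1 A hA B hB y hy, rankOne_zero_left]
  have hidem : ∀ y ∈ K, ∀ g : X →L[ℂ] ℂ, g y = 1 → ∀ C ∈ nestAlgebra 𝒩,
      derDefect D (rankOne y g) C = 0 := by
    intro y hy g hg
    set e := rankOne y g with he
    have hem : e ∈ nestAlgebra 𝒩 := hK.rankOne_mem hy g
    have hee : e * e = e := by rw [he, rankOne_mul_rankOne, hg, one_smul]
    have hy0 : y ≠ 0 := by rintro rfl; simp at hg
    have hsymm : ∀ C ∈ nestAlgebra 𝒩, derDefect D C e = derDefect D e C := by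
      intro C hC
      obtain ⟨c, hc⟩ := h3 y hy g hg C hC
      rw [← he] at hc
      rw [← derDefect_sub_derDefect] at hc
      have := congrArg (fun Z : X →L[ℂ] X => Z y) hc
      simp only [sub_apply, smul_apply, h1 C hC e hem y hy, h1 e hem C hC y hy, sub_zero,
        one_apply_eq_self] at this
      rw [(smul_eq_zero.mp this.symm).resolve_right hy0, zero_smul] at hc
      exact sub_eq_zero.mp hc
    set r := derDefect D e e with hr
    have c1 : ∀ C ∈ nestAlgebra 𝒩, derDefect D e (C * e) = derDefect D e C + C * r := by
      intro C hC
      have := derDefect_cocycle D C e e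
      rw [hee, hright C hC e hem y hy g, hsymm C hC,
        hsymm _ ((nestAlgebra 𝒩).mul_mem hC hem), ← hr] at this
      rw [eq_comm, ← sub_eq_zero, ← this]; abel
    have c2 : ∀ C ∈ nestAlgebra 𝒩, e * derDefect D e C - derDefect D e C + derDefect D e (e * C)
        - r * C = 0 := by
      intro C hC
      have := derDefect_cocycle D e e C
      rwa [hee] at this
    have c3 : ∀ C ∈ nestAlgebra 𝒩, derDefect D e (e * C) =
        e * derDefect D e C + derDefect D e (C * e) := by
      intro C hC
      have := derDefect_cocycle D e C e
      rw [hright e hem C hC y hy g, hsymm C hC,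
        hsymm _ ((nestAlgebra 𝒩).mul_mem hem hC)] at this
      rw [← sub_eq_zero, ← neg_eq_zero, ← this]; abel
    have c4 : ∀ C ∈ nestAlgebra 𝒩, (2 : ℂ) • (e * derDefect D e C) = r * C - C * r := by
      intro C hC
      have := c2 C hC
      rw [c3 C hC, c1 C hC] at this
      rw [two_smul, ← sub_eq_zero, ← this]; abel
    have hre : r * e = 0 := hright e hem e hem y hy g
    have her : e * r = 0 := by
      have := c4 e hem
      rw [← hr, hre, zero_sub, eq_neg_iff_add_eq_zero] at this
      have h3 : (3 : ℂ) • (e * r) = 0 := by rw [← this]; module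
      exact (smul_eq_zero.mp h3).resolve_left three_ne_zero
    have hr0 : r = 0 := by
      ext v
      by_contra hv
      have hv' : r v ≠ 0 := hv
      obtain ⟨k, hk⟩ := exists_functional_eq_one hv'
      have hrv : r v ∈ K := h2 e hem e hem v
      have hCm := hK.rankOne_mem hrv k
      have h4 := c4 _ hCm
      rw [hright e hem e hem _ hrv, zero_sub] at h4
      have h5 : e * (rankOne (r v) k * r) = 0 := by
        rw [← mul_assoc, mul_rankOne, ← mul_operator_apply, her, zero_apply, rankOne_zero_left,
          zero_mul]
      have h6 := congrArg (fun Z => e * Z) h4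
      rw [mul_neg, h5, neg_zero, mul_smul_comm, ← mul_assoc, hee, h4, neg_eq_zero] at h6
      have h7 := congrArg (fun Z : X →L[ℂ] X => Z v) h6
      rw [mul_operator_apply, rankOne_apply, hk, one_smul] at h7
      exact hv' h7
    have hcol : ∀ z ∈ K, g z = 0 → derDefect D e (rankOne z g) = 0 := by
      intro z hz hgz
      have hCm := hK.rankOne_mem hz g
      have h4 := c4 _ hCm
      rw [hr0, zero_mul, mul_zero, sub_zero] at h4
      have h5 := c2 _ hCm
      rw [(smul_eq_zero.mp h4).resolve_left two_ne_zero, he, rankOne_mul_rankOne, hgz, zero_smul,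
        derDefect_zero_right, ← he, hr0, zero_mul] at h5
      simpa using h5
    intro C hC
    have h4 : C * e = rankOne (C y - g (C y) • y) g + g (C y) • e := by
      rw [he, mul_rankOne, rankOne_sub_left, rankOne_smul_left]; abel
    have h5 := c1 C hC
    rw [h4, derDefect_add_right, derDefect_smul_right,
      hcol _ (K.sub_mem (hC K hK.mem y hy) (K.smul_mem _ hy)) (by simp [hg]), ← hr, hr0] at h5
    simpa using h5.symm
  have hrank : ∀ y ∈ K, y ≠ 0 → ∀ k : X →L[ℂ] ℂ, ∀ C ∈ nestAlgebra 𝒩,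
      derDefect D (rankOne y k) C = 0 := by
    intro y hy hy0 k C hC
    by_cases hk : k y = 0
    · obtain ⟨g, hg⟩ := exists_functional_eq_one hy0
      have : rankOne y k = rankOne y (k + g) - rankOne y g := by rw [rankOne_add_right]; abel
      rw [this, derDefect_sub_left, hidem y hy _ (by simp [hk, hg]) C hC, hidem y hy g hg C hC,
        sub_zero]
    · have : rankOne y k = k y • rankOne y ((k y)⁻¹ • k) := by
        rw [rankOne_smul_right, smul_smul, mul_inv_cancel₀ hk, one_smul]
      rw [this, derDefect_smul_left, hidem y hy _ (by simp [hk]) C hC, smul_zero]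
  ext v
  by_contra hv
  have hv' : derDefect D A B v ≠ 0 := hv
  obtain ⟨k, hk⟩ := exists_functional_eq_one hv'
  have hy := h2 A hA B hB v
  have h4 := derDefect_cocycle D (rankOne (derDefect D A B v) k) A B
  rw [rankOne_mul A, hrank _ hy hv' _ B hB, hrank _ hy hv' k A hA,
    hrank _ hy hv' k _ ((nestAlgebra 𝒩).mul_mem hA hB)] at h4
  have h5 := congrArg (fun Z : X →L[ℂ] X => Z v) h4
  simp only [zero_mul, sub_zero, add_zero, mul_operator_apply, rankOne_apply, hk, one_smul,
    zero_apply] at h5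
  exact hv' h5

lemma lieDefect_sub_smulRight (L : (X →L[ℂ] X) →ₗ[ℂ] (X →L[ℂ] X))
    (φ : (X →L[ℂ] X) →ₗ[ℂ] ℂ) (A B : X →L[ℂ] X) :
    lieDefect (L - φ.smulRight (1 : X →L[ℂ] X)) A B =
      lieDefect L A B - φ ⁅A, B⁆ • (1 : X →L[ℂ] X) := by
  simp only [lieDefect_apply, LinearMap.sub_apply, LinearMap.smulRight_apply, sub_lie, lie_sub]
  rw [IsScalarOp.lie_eq_zero ⟨φ A, rfl⟩, IsScalarOp.lie_eq_zero' ⟨φ B, rfl⟩]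
  abel

lemma IsNestAtom.derDefect_eq_zero (hK : IsNestAtom 𝒩 K) {m : ℕ} (hm : 1 ≤ m)
    {L : (X →L[ℂ] X) →ₗ[ℂ] (X →L[ℂ] X)} (hL : IterLieDeriv (nestAlgebra 𝒩) m L)
    {f₀ : X →L[ℂ] ℂ} (hf₀ : f₀ ∈ annih K) {v₀ : X} (hv₀ : f₀ v₀ = 1)
    {φ : (X →L[ℂ] X) →ₗ[ℂ] ℂ} {x₀ : X} (hx₀ : x₀ ∈ K) (h0 : x₀ ≠ 0)
    (hφ : ∀ A ∈ nestAlgebra 𝒩, symbolVec L f₀ v₀ A x₀ = φ A • x₀) {A B : X →L[ℂ] X}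
    (hA : A ∈ nestAlgebra 𝒩) (hB : B ∈ nestAlgebra 𝒩) :
    derDefect (L - φ.smulRight (1 : X →L[ℂ] X)) A B = 0 := by
  have h := hK.isGoodPair hm hL
  refine hK.derDefect_eq_zero_of
    (fun A hA B hB => (h.derDefect_eq hf₀ hv₀ hx₀ h0 hφ hA hB).1)
    (fun A hA B hB v => mem_of_forall_annih (hK.isNest.closed K hK.mem)
      fun f hf => (h.derDefect_eq hf₀ hv₀ hx₀ h0 hφ hA hB).2 f hf v)
    (fun y hy g hg A hA => ?_) hA hB
  rw [lieDefect_sub_smulRight]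
  exact (hK.isScalarOp_lieDefect hm hL hy hg hA).sub ⟨_, rfl⟩

end DerDefect

section Atomless

attribute [local instance] LieRing.ofAssociativeRing

variable {X : Type*} [NormedAddCommGroup X] [NormedSpace ℂ X]

/-- The nonzero members of the nest `𝒩` below any given one intersect in zero. -/
structure IsAtomlessNest (𝒩 : Set (Submodule ℂ X)) : Prop where
  isNest : IsNest 𝒩
  exists_notMem : ∀ N ∈ 𝒩, N ≠ ⊥ → ∀ x : X, x ≠ 0 → ∃ K ∈ 𝒩, K ≠ ⊥ ∧ K ≤ N ∧ x ∉ K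

/-- Subtraction of the scalar operator that agrees with `Y` at `y₀` under the functional `k₀`. -/
def scalarReduce (y₀ : X) (k₀ : X →L[ℂ] ℂ) : (X →L[ℂ] X) →ₗ[ℂ] (X →L[ℂ] X) where
  toFun Y := Y - k₀ (Y y₀) • (1 : X →L[ℂ] X)
  map_add' Y Z := by simp only [add_apply, map_add]; module
  map_smul' c Y := by
    simp only [smul_apply, map_smul, RingHom.id_apply, smul_eq_mul]; module

lemma scalarReduce_apply (y₀ : X) (k₀ : X →L[ℂ] ℂ) (Y : X →L[ℂ] X) (v : X) :
    scalarReduce y₀ k₀ Y v = Y v - k₀ (Y y₀) • v := rfl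

lemma IsScalarOp.scalarReduce_eq_zero {Y : X →L[ℂ] X} (hY : IsScalarOp Y) {y₀ : X}
    {k₀ : X →L[ℂ] ℂ} (h : k₀ y₀ = 1) : scalarReduce y₀ k₀ Y = 0 := by
  obtain ⟨c, rfl⟩ := hY
  ext v
  simp [scalarReduce_apply, h]

lemma isScalarOp_of_scalarReduce_eq_zero {Y : X →L[ℂ] X} {y₀ : X} {k₀ : X →L[ℂ] ℂ}
    (h : scalarReduce y₀ k₀ Y = 0) : IsScalarOp Y :=
  ⟨k₀ (Y y₀), sub_eq_zero.mp h⟩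

variable {𝒩 : Set (Submodule ℂ X)} {L : (X →L[ℂ] X) →ₗ[ℂ] (X →L[ℂ] X)} {m : ℕ}

lemma IsAtomlessNest.exists_eq_smul (h𝒩 : IsAtomlessNest 𝒩) {N : Submodule ℂ X} (hN : N ∈ 𝒩)
    (hb : N ≠ ⊥) {x u : X} (hx : x ≠ 0)
    (h : ∀ K ∈ 𝒩, K ≠ ⊥ → K ≤ N → ∀ g ∈ annih K, g x = 0 → g u = 0) : ∃ c : ℂ, u = c • x := by
  obtain ⟨K₁, hK₁, hK₁b, hK₁N, hxK⟩ := h𝒩.exists_notMem N hN hb x hx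
  obtain ⟨g₁, hg₁, hg₁x⟩ := exists_annih_eq_one (h𝒩.isNest.closed K₁ hK₁) hxK
  refine ⟨g₁ u, ?_⟩
  by_contra hne
  obtain ⟨K, hK, hKb, hKK₁, hnot⟩ :=
    h𝒩.exists_notMem K₁ hK₁ hK₁b (u - g₁ u • x) (sub_ne_zero.mpr hne)
  refine hnot (mem_of_forall_annih (h𝒩.isNest.closed K hK) fun g hg => ?_)
  have := h K hK hKb (hKK₁.trans hK₁N) (g - g x • g₁)
    (sub_mem hg ((annih K).smul_mem _ (annih_anti hKK₁ hg₁))) (by simp [hg₁x])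
  simp only [sub_apply, smul_apply, smul_eq_mul] at this
  rw [map_sub, map_smul, smul_eq_mul]
  linear_combination this

lemma lie_rankOne_rankOne {x z : X} {f g : X →L[ℂ] ℂ} (hf : f x = 0) :
    ⁅rankOne z f, rankOne x g⁆ = (-g z) • rankOne x f := by
  rw [Ring.lie_def, rankOne_mul_rankOne, rankOne_mul_rankOne, hf]; simp

/-- The defect at two operators of rank one is scalar up to an operator with range spanned by
the range of the second one. -/
lemma IsAtomlessNest.exists_lieDefect_rankOne (h𝒩 : IsAtomlessNest 𝒩) (hm : 1 ≤ m)
    (hL : IterLieDeriv (nestAlgebra 𝒩) m L) {K N : Submodule ℂ X} (hK : K ∈ 𝒩) (hN : N ∈ 𝒩)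
    (hNb : N ≠ ⊥) (hNt : N ≠ ⊤) (hKN : K ≤ N) {x z : X} {f g : X →L[ℂ] ℂ} (hx : x ∈ K)
    (hx0 : x ≠ 0) (hz : z ∈ N) (hf : f ∈ annih N) (hg : g ∈ annih K) :
    ∃ c : ℂ, (∀ y ∈ N, lieDefect L (rankOne z f) (rankOne x g) y = c • y) ∧
      ∀ v, ∃ d : ℂ, lieDefect L (rankOne z f) (rankOne x g) v - c • v = d • x := by
  have hZ := h𝒩.isNest.rankOne_mem hN hz hf
  have hJ := h𝒩.isNest.rankOne_mem hK hx hg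
  have hXf := h𝒩.isNest.rankOne_mem hN (hKN hx) hf
  set Y := lieDefect L (rankOne z f) (rankOne x g) with hY
  have hlie : ⁅rankOne z f, rankOne x g⁆ = (-g z) • rankOne x f :=
    lie_rankOne_rankOne (hf x (hKN hx))
  have key : ∀ K' ∈ 𝒩, K' ≤ N → ∀ x' ∈ K', ∀ g' ∈ annih K', g' x = 0 →
      ∀ v, g' v • Y x' = g' (Y v) • x' := by
    intro K' hK' hK'N x' hx' g' hg' hg'x v
    have hJ' := h𝒩.isNest.rankOne_mem hK' hx' hg'
    have h0 : ⁅rankOne x f, rankOne x' g'⁆ = 0 := by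
      rw [lie_rankOne_rankOne (hf x' (hK'N hx')), hg'x, neg_zero, zero_smul]
    have h1 := h𝒩.isNest.isScalarOp_lieDefect_lie hN hNb hNt hm hL hZ hJ hJ'
      (by rw [hlie, smul_lie, h0, smul_zero])
    have h2 := h𝒩.isNest.isScalarOp_lieDefect hN hNb hNt hm hL hXf hJ' h0
    rw [hlie, map_smul, LinearMap.smul_apply, ← hY] at h1
    have h3 : IsScalarOp ⁅Y, rankOne x' g'⁆ := by
      have := h1.sub (h2.smul (-g z))
      rwa [add_sub_cancel_right] at this
    have h4 := lie_eq_zero_of_isScalarOp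
      (by rw [rankOne_mul_rankOne, hg' x' hx', zero_smul]) h3
    have := congrArg (fun Z : X →L[ℂ] X => Z v) h4
    simpa [lie_operator_apply, sub_eq_zero] using this
  obtain ⟨f₀, hf₀, v₀, hv₀⟩ := exists_annih_apply_eq_one (h𝒩.isNest.closed N hN) hNt
  have hY1 : ∀ y ∈ N, Y y = f₀ (Y v₀) • y := fun y hy => by
    have := key N hN le_rfl y hy f₀ hf₀ (hf₀ x (hKN hx)) v₀
    rwa [hv₀, one_smul] at this
  refine ⟨f₀ (Y v₀), hY1, fun v => ?_⟩
  refine h𝒩.exists_eq_smul hN hNb hx0 fun K' hK' hK'b hK'N g' hg' hg'x => ?_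
  obtain ⟨x', hx', hx'0⟩ := K'.ne_bot_iff.mp hK'b
  have := key K' hK' hK'N x' hx' g' hg' hg'x v
  rw [hY1 x' (hK'N hx'), smul_smul] at this
  have := smul_left_injective ℂ hx'0 this
  rw [map_sub, map_smul, smul_eq_mul]
  linear_combination -this

lemma IsAtomlessNest.exists_scalarReduce_eq (h𝒩 : IsAtomlessNest 𝒩) (hm : 1 ≤ m)
    (hL : IterLieDeriv (nestAlgebra 𝒩) m L) {K N : Submodule ℂ X} (hK : K ∈ 𝒩) (hN : N ∈ 𝒩)
    (hNb : N ≠ ⊥) (hNt : N ≠ ⊤) (hKN : K ≤ N) {y₀ : X} (hy₀ : y₀ ∈ N)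
    {k₀ : X →L[ℂ] ℂ} (hk₀ : k₀ y₀ = 1) {z : X} {f g : X →L[ℂ] ℂ}
    (hz : z ∈ N) (hf : f ∈ annih N) (hg : g ∈ annih K) :
    ∃ s : X → ℂ, ∀ v, ∀ x ∈ K,
      scalarReduce y₀ k₀ (lieDefect L (rankOne z f) (rankOne x g)) v = s v • x := by
  have h : ∀ v, ∃ c : ℂ, ∀ x ∈ K,
      scalarReduce y₀ k₀ (lieDefect L (rankOne z f) (rankOne x g)) v = c • x := by
    intro v
    let T : X →ₗ[ℂ] X :=
      { toFun := fun x => scalarReduce y₀ k₀ (lieDefect L (rankOne z f) (rankOne x g)) v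
        map_add' := fun x y => by simp only [rankOne_add_left, map_add, add_apply]
        map_smul' := fun c x => by
          simp only [rankOne_smul_left, map_smul, smul_apply, RingHom.id_apply] }
    refine exists_smul_of_forall_mem_exists_smul T K fun x hx => ?_
    by_cases hx0 : x = 0
    · exact ⟨0, by rw [hx0, map_zero, smul_zero]⟩
    obtain ⟨c, hc1, hc2⟩ := h𝒩.exists_lieDefect_rankOne hm hL hK hN hNb hNt hKN hx hx0 hz hf hg
    obtain ⟨d, hd⟩ := hc2 v
    refine ⟨d, ?_⟩
    change scalarReduce y₀ k₀ _ v = _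
    rw [scalarReduce_apply, hc1 y₀ hy₀, map_smul, hk₀, smul_eq_mul, mul_one, hd]
  choose s hs using h
  exact ⟨s, hs⟩

lemma IsAtomlessNest.scalarReduce_apply_of_mem (h𝒩 : IsAtomlessNest 𝒩) (hm : 1 ≤ m)
    (hL : IterLieDeriv (nestAlgebra 𝒩) m L) {K N : Submodule ℂ X} (hK : K ∈ 𝒩) (hN : N ∈ 𝒩)
    (hNb : N ≠ ⊥) (hNt : N ≠ ⊤) (hKN : K ≤ N) {y₀ : X} (hy₀ : y₀ ∈ N)
    {k₀ : X →L[ℂ] ℂ} (hk₀ : k₀ y₀ = 1) {x z : X} {f g : X →L[ℂ] ℂ} (hx : x ∈ K) (hx0 : x ≠ 0)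
    (hz : z ∈ N) (hf : f ∈ annih N) (hg : g ∈ annih K) {v : X} (hv : v ∈ N) :
    scalarReduce y₀ k₀ (lieDefect L (rankOne z f) (rankOne x g)) v = 0 := by
  obtain ⟨c, hc1, -⟩ := h𝒩.exists_lieDefect_rankOne hm hL hK hN hNb hNt hKN hx hx0 hz hf hg
  rw [scalarReduce_apply, hc1 y₀ hy₀, map_smul, hk₀, smul_eq_mul, mul_one, hc1 v hv, sub_self]

lemma IsAtomlessNest.scalarReduce_eq_zero (h𝒩 : IsAtomlessNest 𝒩) (hm : 1 ≤ m)
    (hL : IterLieDeriv (nestAlgebra 𝒩) m L) {K N : Submodule ℂ X} (hK : K ∈ 𝒩) (hN : N ∈ 𝒩)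
    (hNb : N ≠ ⊥) (hNt : N ≠ ⊤) (hKN : K ≤ N) {y₀ : X}
    {k₀ : X →L[ℂ] ℂ} (hk₀ : k₀ y₀ = 1) {x z : X} {f g : X →L[ℂ] ℂ} (hx : x ∈ K)
    (hz : z ∈ N) (hf : f ∈ annih N) (hg : g ∈ annih K) (hgz : g z = 0) :
    scalarReduce y₀ k₀ (lieDefect L (rankOne z f) (rankOne x g)) = 0 :=
  (h𝒩.isNest.isScalarOp_lieDefect hN hNb hNt hm hL (h𝒩.isNest.rankOne_mem hN hz hf)
    (h𝒩.isNest.rankOne_mem hK hx hg)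
    (by rw [lie_rankOne_rankOne (hf x (hKN hx)), hgz, neg_zero, zero_smul])).scalarReduce_eq_zero
      hk₀

lemma IsAtomlessNest.scalarReduce_eq (h𝒩 : IsAtomlessNest 𝒩) (hm : 1 ≤ m)
    (hL : IterLieDeriv (nestAlgebra 𝒩) m L) {K K' N : Submodule ℂ X}
    (hK' : K' ∈ 𝒩) (hN : N ∈ 𝒩) (hNb : N ≠ ⊥) (hNt : N ≠ ⊤) (hKN : K ≤ N) (hK'K : K' ≤ K) {y₀ : X}
    {k₀ : X →L[ℂ] ℂ} (hk₀ : k₀ y₀ = 1) {x x' z : X} {f g g' : X →L[ℂ] ℂ} (hx : x ∈ K)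
    (hx' : x' ∈ K') (hz : z ∈ N) (hf : f ∈ annih N) (hg : g ∈ annih K) (hgz : g z = -1)
    (hg' : g' ∈ annih K') (hg'x : g' x = -1) :
    scalarReduce y₀ k₀ (lieDefect L (rankOne x f) (rankOne x' g')) =
      scalarReduce y₀ k₀ (lieDefect L (rankOne z f) (rankOne x' g)) := by
  have hK'N := hK'K.trans hKN
  have hgK' := annih_anti hK'K hg
  have hgx : g x = 0 := hg x hx
  have h1 := h𝒩.scalarReduce_eq_zero hm hL hK' hN hNb hNt hK'N hk₀ hx'
    (N.add_mem hz (N.smul_mem (1 + g' z) (hKN hx))) hf (sub_mem hgK' hg')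
    (by simp [hgz, hgx, hg'x])
  have h2 := h𝒩.scalarReduce_eq_zero hm hL hK' hN hNb hNt hK'N hk₀ hx' (hKN hx) hf hgK' hgx
  have h3 := h𝒩.scalarReduce_eq_zero hm hL hK' hN hNb hNt hK'N hk₀ hx'
    (N.add_mem hz (N.smul_mem (g' z) (hKN hx))) hf hg' (by simp [hg'x])
  simp only [rankOne_add_left, rankOne_smul_left, rankOne_sub_right, map_add, map_smul, map_sub,
    LinearMap.add_apply, LinearMap.smul_apply] at h1 h2 h3
  rw [h2] at h1
  rw [eq_comm, ← sub_eq_zero]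
  linear_combination (norm := module) h1 + h3

end Atomless

section AtomlessCounting

attribute [local instance] LieRing.ofAssociativeRing

variable {X : Type*} [NormedAddCommGroup X] [NormedSpace ℂ X] {𝒩 : Set (Submodule ℂ X)}
  {L : (X →L[ℂ] X) →ₗ[ℂ] (X →L[ℂ] X)} {m : ℕ}

/-- The nonscalar part of the defect at operators of rank one is additive along a chain of
commutators of operators of rank one. -/
lemma IsAtomlessNest.exists_list_iterDefect_eq (h𝒩 : IsAtomlessNest 𝒩) (hm : 1 ≤ m)
    (hL : IterLieDeriv (nestAlgebra 𝒩) m L) {K N : Submodule ℂ X} (hK : K ∈ 𝒩) (hKb : K ≠ ⊥)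
    (hN : N ∈ 𝒩) (hNb : N ≠ ⊥) (hNt : N ≠ ⊤) (hKN : K ≤ N) {y₀ : X} {k₀ : X →L[ℂ] ℂ}
    (hk₀ : k₀ y₀ = 1) {z : X} {f g : X →L[ℂ] ℂ} (hz : z ∈ N) (hf : f ∈ annih N)
    (hg : g ∈ annih K) (hgz : g z = -1) {s : X → ℂ}
    (hs : ∀ v, ∀ x ∈ K,
      scalarReduce y₀ k₀ (lieDefect L (rankOne z f) (rankOne x g)) v = s v • x)
    (hs0 : ∀ v ∈ N, s v = 0) (j : ℕ) :
    ∃ K' ∈ 𝒩, K' ≠ ⊥ ∧ K' ≤ N ∧ ∃ z' ∈ N, ∃ g' ∈ annih K', g' z' = -1 ∧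
      (∀ v, ∀ x ∈ K',
        scalarReduce y₀ k₀ (lieDefect L (rankOne z' f) (rankOne x g')) v = s v • x) ∧
      ∃ l : List (X →L[ℂ] X), (∀ b ∈ l, b ∈ nestAlgebra 𝒩) ∧ l.length = j ∧
        iterLie (rankOne z f) l = rankOne z' f ∧
        ∃ c : ℂ, ∀ v, iterDefect L (rankOne z f) l v = c • v + (j * s v) • z' := by
  induction j with
  | zero =>
    exact ⟨K, hK, hKb, hKN, z, hz, g, hg, hgz, hs, [], by simp, rfl, rfl, 0, by simp⟩
  | succ j ih =>
    obtain ⟨K₁, hK₁, hK₁b, hK₁N, z₁, hz₁, g₁, hg₁, hgz₁, hs₁, l, hl, hlj, hlie, c, hc⟩ := ih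
    obtain ⟨x, hx, hx0⟩ := K₁.ne_bot_iff.mp hK₁b
    obtain ⟨K₂, hK₂, hK₂b, hK₂K₁, hxK₂⟩ := h𝒩.exists_notMem K₁ hK₁ hK₁b x hx0
    obtain ⟨g₂, hg₂, hgx₂⟩ := exists_annih_eq_one (h𝒩.isNest.closed K₂ hK₂) hxK₂
    have hgx : (-g₂) x = -1 := by simp [hgx₂]
    refine ⟨K₂, hK₂, hK₂b, hK₂K₁.trans hK₁N, x, hK₁N hx, -g₂, neg_mem hg₂, hgx, ?_,
      rankOne x g₁ :: l, ?_, by simp [hlj], ?_,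
      k₀ (lieDefect L (rankOne z₁ f) (rankOne x g₁) y₀), ?_⟩
    · intro v x' hx'
      rw [h𝒩.scalarReduce_eq hm hL hK₂ hN hNb hNt hK₁N hK₂K₁ hk₀ hx hx' hz₁ hf hg₁ hgz₁
        (neg_mem hg₂) hgx]
      exact hs₁ v x' (hK₂K₁ hx')
    · intro b hb
      rcases List.mem_cons.mp hb with rfl | hb
      · exact h𝒩.isNest.rankOne_mem hK₁ hx hg₁
      · exact hl b hb
    · rw [iterLie_cons, hlie, lie_rankOne_rankOne (hf x (hK₁N hx)), hgz₁, neg_neg, one_smul]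
    · intro v
      have h1 := hs₁ v x hx
      rw [scalarReduce_apply, sub_eq_iff_eq_add] at h1
      rw [iterDefect_cons, hlie, add_apply, h1, lie_operator_apply, hc, hc]
      simp only [rankOne_apply, map_add, map_smul, hs0 _ (N.smul_mem _ (hK₁N hx)), hgz₁]
      push_cast
      module

/-- The defect at two operators of rank one is scalar. -/
lemma IsAtomlessNest.isScalarOp_lieDefect_rankOne (h𝒩 : IsAtomlessNest 𝒩) (hm : 1 ≤ m)
    (hL : IterLieDeriv (nestAlgebra 𝒩) m L) {K N : Submodule ℂ X} (hK : K ∈ 𝒩)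
    (hN : N ∈ 𝒩) (hNt : N ≠ ⊤) (hKN : K ≤ N) {x z : X} {f g : X →L[ℂ] ℂ} (hx : x ∈ K)
    (hz : z ∈ N) (hf : f ∈ annih N) (hg : g ∈ annih K) :
    IsScalarOp (lieDefect L (rankOne z f) (rankOne x g)) := by
  by_cases hx0 : x = 0
  · rw [hx0, rankOne_zero_left, map_zero]; exact isScalarOp_zero
  have hKb : K ≠ ⊥ := K.ne_bot_iff.mpr ⟨x, hx, hx0⟩
  have hNb : N ≠ ⊥ := N.ne_bot_iff.mpr ⟨x, hKN hx, hx0⟩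
  by_cases hgz : g z = 0
  · exact h𝒩.isNest.isScalarOp_lieDefect hN hNb hNt hm hL (h𝒩.isNest.rankOne_mem hN hz hf)
      (h𝒩.isNest.rankOne_mem hK hx hg)
      (by rw [lie_rankOne_rankOne (hf x (hKN hx)), hgz, neg_zero, zero_smul])
  obtain ⟨k₀, hk₀⟩ := exists_functional_eq_one hx0
  have hg₁ : (-(g z)⁻¹) • g ∈ annih K := (annih K).smul_mem _ hg
  have hgz₁ : ((-(g z)⁻¹) • g) z = -1 := by simp [hgz]
  obtain ⟨s, hs⟩ :=
    h𝒩.exists_scalarReduce_eq hm hL hK hN hNb hNt hKN (hKN hx) hk₀ hz hf hg₁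
  have hs0 : ∀ v ∈ N, s v = 0 := fun v hv => by
    have h := hs v x hx
    rw [h𝒩.scalarReduce_apply_of_mem hm hL hK hN hNb hNt hKN (hKN hx) hk₀ hx hx0 hz hf hg₁ hv] at h
    exact (smul_eq_zero.mp h.symm).resolve_right hx0
  obtain ⟨-, -, -, -, z', hz', g', -, hgz', -, l, hl, hlm, -, c, hc⟩ :=
    h𝒩.exists_list_iterDefect_eq hm hL hK hKb hN hNb hNt hKN hk₀ hz hf hg₁ hgz₁ hs hs0 m
  have hz'0 : z' ≠ 0 := by
    rintro rfl
    simp at hgz'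
  rw [hL _ (h𝒩.isNest.rankOne_mem hN hz hf) l hl hlm] at hc
  have hc0 : c = 0 := by
    have h := hc z'
    rw [hs0 z' hz', mul_zero, zero_smul, add_zero] at h
    exact (smul_eq_zero.mp h.symm).resolve_right hz'0
  have hsz : ∀ v, s v = 0 := fun v => by
    have h := hc v
    rw [hc0, zero_smul, zero_add] at h
    have := (smul_eq_zero.mp h.symm).resolve_right hz'0
    exact (mul_eq_zero.mp this).resolve_left (by exact_mod_cast (by omega : m ≠ 0))
  have h1 : IsScalarOp (lieDefect L (rankOne z f) (rankOne x ((-(g z)⁻¹) • g))) := by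
    refine isScalarOp_of_scalarReduce_eq_zero (y₀ := x) (k₀ := k₀) ?_
    ext v
    rw [hs v x hx, hsz v, zero_smul]; rfl
  have h2 : rankOne x g = (-g z) • rankOne x ((-(g z)⁻¹) • g) := by
    rw [rankOne_smul_right, smul_smul, neg_mul_neg, mul_inv_cancel₀ hgz, one_smul]
  rw [h2, map_smul]
  exact h1.smul _

end AtomlessCounting

section AtomlessGoodPair

attribute [local instance] LieRing.ofAssociativeRing

variable {X : Type*} [NormedAddCommGroup X] [NormedSpace ℂ X] {𝒩 : Set (Submodule ℂ X)}
  {L : (X →L[ℂ] X) →ₗ[ℂ] (X →L[ℂ] X)} {m : ℕ}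

lemma IsAtomlessNest.exists_list_isScalarOp (h𝒩 : IsAtomlessNest 𝒩) (hm : 1 ≤ m)
    (hL : IterLieDeriv (nestAlgebra 𝒩) m L) {N : Submodule ℂ X} (hN : N ∈ 𝒩) (hNb : N ≠ ⊥)
    (hNt : N ≠ ⊤) (j : ℕ) :
    ∃ K ∈ 𝒩, K ≠ ⊥ ∧ K ≤ N ∧ ∀ x ∈ K, ∀ f ∈ annih N, ∃ z ∈ N, ∃ l : List (X →L[ℂ] X),
      (∀ b ∈ l, b ∈ nestAlgebra 𝒩) ∧ l.length = j ∧ iterLie (rankOne z f) l = rankOne x f ∧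
        IsScalarOp (iterDefect L (rankOne z f) l) := by
  induction j with
  | zero =>
    exact ⟨N, hN, hNb, le_rfl, fun x hx f _ => ⟨x, hx, [], by simp, rfl, rfl, isScalarOp_zero⟩⟩
  | succ j ih =>
    obtain ⟨K, hK, hKb, hKN, h⟩ := ih
    obtain ⟨y, hy, hy0⟩ := K.ne_bot_iff.mp hKb
    obtain ⟨K', hK', hK'b, hK'K, hyK'⟩ := h𝒩.exists_notMem K hK hKb y hy0
    obtain ⟨g, hg, hgy⟩ := exists_annih_eq_one (h𝒩.isNest.closed K' hK') hyK'
    refine ⟨K', hK', hK'b, hK'K.trans hKN, fun x hx f hf => ?_⟩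
    obtain ⟨z, hz, l, hl, hlj, hlie, hsc⟩ := h y hy f hf
    refine ⟨z, hz, rankOne x (-g) :: l, ?_, by simp [hlj], ?_, ?_⟩
    · intro b hb
      rcases List.mem_cons.mp hb with rfl | hb
      · exact h𝒩.isNest.rankOne_mem hK' hx (neg_mem hg)
      · exact hl b hb
    · rw [iterLie_cons, hlie, lie_rankOne_rankOne (hf x (hKN (hK'K hx)))]
      simp [hgy]
    · rw [iterDefect_cons, hsc.lie_eq_zero, zero_add, hlie]
      exact h𝒩.isScalarOp_lieDefect_rankOne hm hL hK' hN hNt (hK'K.trans hKN) hx (hKN hy) hf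
        (neg_mem hg)

lemma IsAtomlessNest.exists_lieDefect_eq_zero (h𝒩 : IsAtomlessNest 𝒩) (hm : 1 ≤ m)
    (hL : IterLieDeriv (nestAlgebra 𝒩) m L) {N : Submodule ℂ X} (hN : N ∈ 𝒩) (hNb : N ≠ ⊥)
    (hNt : N ≠ ⊤) :
    ∃ K ∈ 𝒩, K ≠ ⊥ ∧ K ≤ N ∧ ∀ A ∈ nestAlgebra 𝒩, ∀ x ∈ K, ∀ f ∈ annih N,
      lieDefect L (rankOne x f) A = 0 := by
  obtain ⟨K, hK, hKb, hKN, h⟩ := h𝒩.exists_list_isScalarOp hm hL hN hNb hNt (m - 1)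
  refine ⟨K, hK, hKb, hKN, fun A hA x hx f hf => ?_⟩
  obtain ⟨z, hz, l, hl, hlm, hlie, hsc⟩ := h x hx f hf
  have h1 := hL _ (h𝒩.isNest.rankOne_mem hN hz hf) (A :: l) (by
    intro b hb
    rcases List.mem_cons.mp hb with rfl | hb
    · exact hA
    · exact hl b hb) (by simp; omega)
  rwa [iterDefect_cons, hsc.lie_eq_zero, zero_add, hlie] at h1

lemma smul_apply_eq_of_lieDefect_eq_zero {x z : X} {f g : X →L[ℂ] ℂ} (hfx : f x = 0)
    (h : lieDefect L (rankOne z f) (rankOne x g) = 0) {v : X} (hv : f v = 0) :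
    (-g z) • L (rankOne x f) v = g v • L (rankOne z f) x - g (L (rankOne z f) v) • x +
      f (L (rankOne x g) v) • z := by
  rw [lieDefect_apply, lie_rankOne_rankOne hfx, map_smul] at h
  have h1 := congrArg (fun Z : X →L[ℂ] X => Z v) h
  simp only [sub_apply, smul_apply, lie_operator_apply, zero_apply, rankOne_apply, hv, zero_smul,
    map_zero, map_smul] at h1
  rw [← sub_eq_zero, ← h1]
  module

lemma IsAtomlessNest.exists_isGoodPair (h𝒩 : IsAtomlessNest 𝒩) (hm : 1 ≤ m)
    (hL : IterLieDeriv (nestAlgebra 𝒩) m L) {N : Submodule ℂ X} (hN : N ∈ 𝒩) (hNb : N ≠ ⊥)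
    (hNt : N ≠ ⊤) : ∃ K, IsGoodPair 𝒩 L K N := by
  obtain ⟨K₀, hK₀, hK₀b, hK₀N, h⟩ := h𝒩.exists_lieDefect_eq_zero hm hL hN hNb hNt
  obtain ⟨z, hz, hz0⟩ := K₀.ne_bot_iff.mp hK₀b
  obtain ⟨K₂, hK₂, hK₂b, hK₂₀, hzK₂⟩ := h𝒩.exists_notMem K₀ hK₀ hK₀b z hz0
  obtain ⟨k, hk, hk0⟩ := K₂.ne_bot_iff.mp hK₂b
  obtain ⟨K₃, hK₃, hK₃b, hK₃₂, hkK₃⟩ := h𝒩.exists_notMem K₂ hK₂ hK₂b k hk0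
  obtain ⟨g, hg, hgz⟩ := exists_annih_eq_one (h𝒩.isNest.closed K₂ hK₂) hzK₂
  obtain ⟨q, hq, hqk⟩ := exists_annih_eq_one (h𝒩.isNest.closed K₃ hK₃) hkK₃
  have hK₃₀ := hK₃₂.trans hK₂₀
  have hgK₃ := annih_anti hK₃₂ hg
  have hgk : g k = 0 := hg k hk
  obtain ⟨p, hp, hpz, hpk⟩ : ∃ p ∈ annih K₃, p z = 0 ∧ p k = 1 :=
    ⟨q - q z • g, sub_mem hq ((annih K₃).smul_mem _ hgK₃), by simp [hgz], by simp [hqk, hgk]⟩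
  refine ⟨K₃, hK₃, hN, hK₃₀.trans hK₀N, hK₃b, hNt, ?_, ?_⟩
  · intro A hA x hx f hf
    rw [lieDefect_skew, h A hA x (hK₃₀ hx) f hf, neg_zero]
  · intro x hx f hf v hv
    have hfx : f x = 0 := hf x (hK₀N (hK₃₀ hx))
    have hfz : f z = 0 := hf z (hK₀N hz)
    have hfk : f k = 0 := hf k (hK₀N (hK₂₀ hk))
    have hG := fun y (hy : y ∈ K₀) e (he : e ∈ annih K₃) =>
      h _ (h𝒩.isNest.rankOne_mem hK₃ hx he) y hy f hf
    have e1 := smul_apply_eq_of_lieDefect_eq_zero hfx (hG z hz g hgK₃) hv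
    have e2 := smul_apply_eq_of_lieDefect_eq_zero hfx (hG k (hK₂₀ hk) p hp) hv
    have e3 := smul_apply_eq_of_lieDefect_eq_zero hfx (hG k (hK₂₀ hk) g hgK₃) hfz
    have e4 := smul_apply_eq_of_lieDefect_eq_zero hfx (hG z hz p hp) hfk
    rw [hgk, neg_zero, zero_smul, hgz, one_smul] at e3
    rw [hpz, neg_zero, zero_smul, hpk, one_smul] at e4
    rw [hgz] at e1
    rw [hpk] at e2
    have e5 : L (rankOne k f) x =
        g (L (rankOne k f) z) • x - f (L (rankOne x g) z) • k := by
      linear_combination (norm := module) -e3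
    have e6 : L (rankOne z f) x =
        p (L (rankOne z f) k) • x - f (L (rankOne x p) k) • z := by
      linear_combination (norm := module) -e4
    rw [e6] at e1
    rw [e5] at e2
    have hgx : g x = 0 := hgK₃ x hx
    have e7 := congrArg g e1
    have e8 := congrArg g e2
    simp only [map_sub, map_add, map_smul, smul_eq_mul, hgx, hgk, hgz] at e7 e8
    have e9 : f (L (rankOne x g) v) = g v * f (L (rankOne x p) k) := by
      linear_combination e8 - e7
    rw [e9] at e1
    refine ⟨g (L (rankOne z f) v) - g v * p (L (rankOne z f) k), ?_⟩
    linear_combination (norm := module) -e1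

end AtomlessGoodPair

section AtomlessDerivation

variable {X : Type*} [NormedAddCommGroup X] [NormedSpace ℂ X] {𝒩 : Set (Submodule ℂ X)}
  {L : (X →L[ℂ] X) →ₗ[ℂ] (X →L[ℂ] X)} {m : ℕ}

lemma IsNest.exists_mem_ne_zero (h𝒩 : IsNest 𝒩) {K N : Submodule ℂ X} (hK : K ∈ 𝒩) (hN : N ∈ 𝒩)
    (hKb : K ≠ ⊥) (hNb : N ≠ ⊥) : ∃ x ∈ K, x ∈ N ∧ x ≠ 0 := by
  rcases h𝒩.total K hK N hN with h | h
  · obtain ⟨x, hx, hx0⟩ := K.ne_bot_iff.mp hKb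
    exact ⟨x, hx, h hx, hx0⟩
  · obtain ⟨x, hx, hx0⟩ := N.ne_bot_iff.mp hNb
    exact ⟨x, h hx, hx, hx0⟩

lemma IsAtomlessNest.derDefect_eq_zero (h𝒩 : IsAtomlessNest 𝒩) (hm : 1 ≤ m)
    (hL : IterLieDeriv (nestAlgebra 𝒩) m L) {K N : Submodule ℂ X} (hKN : IsGoodPair 𝒩 L K N)
    {f₀ : X →L[ℂ] ℂ} (hf₀ : f₀ ∈ annih N) {v₀ : X} (hv₀ : f₀ v₀ = 1)
    {φ : (X →L[ℂ] X) →ₗ[ℂ] ℂ} {x₀ : X} (hx₀ : x₀ ∈ K) (h0 : x₀ ≠ 0)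
    (hφ : ∀ A ∈ nestAlgebra 𝒩, symbolVec L f₀ v₀ A x₀ = φ A • x₀) {A B : X →L[ℂ] X}
    (hA : A ∈ nestAlgebra 𝒩) (hB : B ∈ nestAlgebra 𝒩) :
    derDefect (L - φ.smulRight (1 : X →L[ℂ] X)) A B = 0 := by
  have hNb : N ≠ ⊥ := fun h => hKN.ne_bot (le_bot_iff.mp (h ▸ hKN.le))
  ext v
  by_contra hv
  obtain ⟨M, hM, hMb, hMN, hnot⟩ := h𝒩.exists_notMem N hKN.mem_right hNb _ hv
  have hMt : M ≠ ⊤ := fun h => hKN.ne_top (top_le_iff.mp (h ▸ hMN))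
  obtain ⟨K', hK'M⟩ := h𝒩.exists_isGoodPair hm hL hM hMb hMt
  obtain ⟨x, hx, hx', hx0⟩ :=
    h𝒩.isNest.exists_mem_ne_zero hKN.mem_left hK'M.mem_left hKN.ne_bot hK'M.ne_bot
  obtain ⟨s, hs⟩ := hKN.exists_symbol hf₀ hv₀
  refine hnot (mem_of_forall_annih (h𝒩.isNest.closed M hM) fun f hf =>
    (hK'M.derDefect_eq (annih_anti hMN hf₀) hv₀ hx' hx0 (fun C hC => ?_) hA hB).2 f hf v)
  obtain ⟨c, hc, -⟩ := hs C hC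
  have : c = φ C := smul_left_injective ℂ h0 ((hc x₀ hx₀).symm.trans (hφ C hC))
  rw [hc x hx, this]

/-- A nontrivial nest either has a smallest nonzero member or is atomless. -/
lemma IsNest.exists_isNestAtom_or_isAtomlessNest (h𝒩 : IsNest 𝒩)
    (h : 𝒩 ≠ ({⊥, ⊤} : Set (Submodule ℂ X))) :
    (∃ K, IsNestAtom 𝒩 K) ∨ IsAtomlessNest 𝒩 := by
  obtain ⟨N₀, hN₀, hN₀b, hN₀t⟩ := h𝒩.exists_nontrivial h
  have hmem : sInf {M ∈ 𝒩 | M ≠ ⊥} ∈ 𝒩 := h𝒩.sInf_mem _ fun M hM => hM.1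
  by_cases hK : sInf {M ∈ 𝒩 | M ≠ ⊥} = ⊥
  · refine Or.inr ⟨h𝒩, fun N hN hNb x hx => ?_⟩
    obtain ⟨M, hM, hMb, hxM⟩ : ∃ M ∈ 𝒩, M ≠ ⊥ ∧ x ∉ M := by
      by_contra! h'
      refine hx ((Submodule.mem_bot ℂ).mp (hK ▸ Submodule.mem_sInf.mpr fun M hM => ?_))
      exact h' M hM.1 hM.2
    rcases h𝒩.total M hM N hN with h' | h'
    · exact ⟨M, hM, hMb, h', hxM⟩
    · exact ⟨N, hN, hNb, le_rfl, fun h => hxM (h' h)⟩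
  · exact Or.inl ⟨_, h𝒩, hmem, hK,
      fun ht => hN₀t (top_le_iff.mp (ht ▸ sInf_le ⟨hN₀, hN₀b⟩)), fun M hM hMb => sInf_le ⟨hM, hMb⟩⟩

/-- A map with vanishing iterated defects on a nontrivial nest algebra is a derivation up to a
scalar-valued map given by its symbol. -/
lemma IsNest.exists_derDefect_eq_zero (h𝒩 : IsNest 𝒩)
    (h : 𝒩 ≠ ({⊥, ⊤} : Set (Submodule ℂ X))) (hm : 1 ≤ m)
    (hL : IterLieDeriv (nestAlgebra 𝒩) m L) :
    ∃ N ∈ 𝒩, ∃ x₀ ∈ N, ∃ f₀ ∈ annih N, ∃ v₀ : X, ∃ k₀ : X →L[ℂ] ℂ,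
      ∀ φ : (X →L[ℂ] X) →ₗ[ℂ] ℂ, (∀ A, φ A = k₀ (symbolVec L f₀ v₀ A x₀)) →
        ∀ A ∈ nestAlgebra 𝒩, ∀ B ∈ nestAlgebra 𝒩,
          derDefect (L - φ.smulRight (1 : X →L[ℂ] X)) A B = 0 := by
  obtain ⟨K, N, hKN, key⟩ : ∃ K N, IsGoodPair 𝒩 L K N ∧
      ∀ f₀ ∈ annih N, ∀ v₀, f₀ v₀ = 1 → ∀ φ : (X →L[ℂ] X) →ₗ[ℂ] ℂ, ∀ x₀ ∈ K, x₀ ≠ 0 →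
        (∀ A ∈ nestAlgebra 𝒩, symbolVec L f₀ v₀ A x₀ = φ A • x₀) → ∀ A ∈ nestAlgebra 𝒩,
          ∀ B ∈ nestAlgebra 𝒩, derDefect (L - φ.smulRight (1 : X →L[ℂ] X)) A B = 0 := by
    rcases h𝒩.exists_isNestAtom_or_isAtomlessNest h with ⟨K, hK⟩ | hA
    · exact ⟨K, K, hK.isGoodPair hm hL, fun f₀ hf₀ v₀ hv₀ φ x₀ hx₀ h0 hφ A hA B hB =>
        hK.derDefect_eq_zero hm hL hf₀ hv₀ hx₀ h0 hφ hA hB⟩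
    · obtain ⟨N, hN, hNb, hNt⟩ := h𝒩.exists_nontrivial h
      obtain ⟨K, hKN⟩ := hA.exists_isGoodPair hm hL hN hNb hNt
      exact ⟨K, N, hKN, fun f₀ hf₀ v₀ hv₀ φ x₀ hx₀ h0 hφ A hA' B hB =>
        hA.derDefect_eq_zero hm hL hKN hf₀ hv₀ hx₀ h0 hφ hA' hB⟩
  obtain ⟨x₀, hx₀, h0⟩ := K.ne_bot_iff.mp hKN.ne_bot
  obtain ⟨f₀, hf₀, v₀, hv₀⟩ :=
    exists_annih_apply_eq_one (h𝒩.closed N hKN.mem_right) hKN.ne_top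
  obtain ⟨k₀, hk₀⟩ := exists_functional_eq_one h0
  refine ⟨N, hKN.mem_right, x₀, hKN.le hx₀, f₀, hf₀, v₀, k₀, fun φ hφ A hA B hB =>
    key f₀ hf₀ v₀ hv₀ φ x₀ hx₀ h0 (fun C hC => ?_) A hA B hB⟩
  obtain ⟨s, hs⟩ := hKN.exists_symbol hf₀ hv₀
  obtain ⟨c, hc, -⟩ := hs C hC
  rw [hφ, hc x₀ hx₀, map_smul, hk₀, smul_eq_mul, mul_one]

end AtomlessDerivation

section CommPoly

attribute [local instance] LieRing.ofAssociativeRing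

variable {B : Type*} [Ring B]

lemma sum_commPoly_update_add (n : ℕ) (a d e : Fin n → B) :
    ∑ k, commPoly n (Function.update a k (d k + e k)) =
      ∑ k, commPoly n (Function.update a k (d k)) +
        ∑ k, commPoly n (Function.update a k (e k)) := by
  induction n with
  | zero => simp
  | succ n ih =>
    cases n with
    | zero => simp [commPoly]
    | succ n =>
      rw [sum_commPoly_update n a d, sum_commPoly_update n a e,
        sum_commPoly_update n a fun k => d k + e k, ih, add_lie, lie_add]
      abel

/-- Derivations are Lie `n`-derivations. -/
lemma IsDerivOn.isLieNDeriv [Algebra ℂ B] {𝒜 : Subalgebra ℂ B} {D : ↥𝒜 →ₗ[ℂ] B}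
    (hD : IsDerivOn 𝒜 D) (n : ℕ) : IsLieNDeriv 𝒜 n D := by
  intro a
  induction n with
  | zero => simp [commPoly]
  | succ n ih =>
    cases n with
    | zero => simp [commPoly]
    | succ n =>
      rw [sum_commPoly_update n (fun i => (a i : B)) fun k => D (a k), ← ih, ← commPoly_coe]
      change D (commPoly (n + 1) (fun i => a i.castSucc) * a (Fin.last (n + 1)) -
        a (Fin.last (n + 1)) * commPoly (n + 1) (fun i => a i.castSucc)) = _
      rw [map_sub, hD, hD, Ring.lie_def, Ring.lie_def]
      abel

variable {X : Type*} [NormedAddCommGroup X] [NormedSpace ℂ X]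

lemma sum_commPoly_update_eq_zero {n : ℕ} (hn : 2 ≤ n) (a d : Fin n → X →L[ℂ] X)
    (hd : ∀ k, IsScalarOp (d k)) : ∑ k, commPoly n (Function.update a k (d k)) = 0 := by
  obtain ⟨n, rfl⟩ := Nat.exists_eq_add_of_le' hn
  induction n with
  | zero =>
    rw [sum_commPoly_update, (hd _).lie_eq_zero']
    simp [commPoly, (hd _).lie_eq_zero]
  | succ n ih =>
    rw [sum_commPoly_update, (hd _).lie_eq_zero', ih (by omega) _ _ fun k => hd _, zero_lie,
      add_zero]

lemma isLieNDeriv_add_iff {𝒜 : Subalgebra ℂ (X →L[ℂ] X)} {n : ℕ} (hn : 2 ≤ n)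
    {D H : ↥𝒜 →ₗ[ℂ] (X →L[ℂ] X)} (hD : IsDerivOn 𝒜 D) (hH : ∀ a, IsScalarOp (H a)) :
    IsLieNDeriv 𝒜 n (D + H) ↔ ∀ a : Fin n → ↥𝒜, H (commPoly n a) = 0 := by
  refine forall_congr' fun a => ?_
  simp only [LinearMap.add_apply]
  rw [sum_commPoly_update_add, sum_commPoly_update_eq_zero hn _ _ fun k => hH (a k),
    hD.isLieNDeriv n a]
  simp

/-- Lie `n`-derivations of a nontrivial nest algebra are sums of a derivation and a
scalar-valued map. -/
lemma IsNest.exists_isDerivOn {𝒩 : Set (Submodule ℂ X)} (h𝒩 : IsNest 𝒩)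
    (h : 𝒩 ≠ ({⊥, ⊤} : Set (Submodule ℂ X))) {n : ℕ} (hn : 2 ≤ n)
    {L : ↥(nestAlgebra 𝒩) →ₗ[ℂ] (X →L[ℂ] X)} (hL : IsLieNDeriv (nestAlgebra 𝒩) n L) :
    ∃ D H : ↥(nestAlgebra 𝒩) →ₗ[ℂ] (X →L[ℂ] X), IsDerivOn (nestAlgebra 𝒩) D ∧
      (∀ a, IsScalarOp (H a)) ∧ (∀ a : Fin n → ↥(nestAlgebra 𝒩), H (commPoly n a) = 0) ∧
      L = D + H ∧ (Continuous L → Continuous D ∧ Continuous H) := by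
  obtain ⟨m, rfl⟩ : ∃ m, n = m + 1 := ⟨n - 1, by omega⟩
  obtain ⟨L', hL'⟩ : ∃ L' : (X →L[ℂ] X) →ₗ[ℂ] (X →L[ℂ] X), ∀ a : ↥(nestAlgebra 𝒩), L' a = L a := by
    obtain ⟨L', hL'⟩ := LinearMap.exists_extend (p := Subalgebra.toSubmodule (nestAlgebra 𝒩)) L
    exact ⟨L', fun a => congrArg (fun F => F a) hL'⟩
  obtain ⟨N, hN, x₀, hx₀, f₀, hf₀, v₀, k₀, key⟩ :=
    h𝒩.exists_derDefect_eq_zero h (by omega) (hL.iterLieDeriv hL')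
  let φ : (X →L[ℂ] X) →ₗ[ℂ] ℂ :=
    { toFun := fun A => k₀ (symbolVec L' f₀ v₀ A x₀)
      map_add' := fun A C => by
        simp only [symbolVec, map_add, map_sub, add_apply, rankOne_add_left]; ring
      map_smul' := fun c A => by
        simp only [symbolVec, map_add, map_sub, map_smul, smul_apply, rankOne_smul_left,
          RingHom.id_apply, smul_eq_mul]; ring }
  let H : ↥(nestAlgebra 𝒩) →ₗ[ℂ] (X →L[ℂ] X) :=
    (φ ∘ₗ (nestAlgebra 𝒩).val.toLinearMap).smulRight 1
  have hH : ∀ a, IsScalarOp (H a) := fun a => ⟨φ a, rfl⟩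
  have hD : IsDerivOn (nestAlgebra 𝒩) (L - H) := by
    intro a b
    have h1 := key φ (fun _ => rfl) a a.2 b b.2
    have h2 : ∀ c : ↥(nestAlgebra 𝒩),
        (L' - φ.smulRight (1 : X →L[ℂ] X)) (c : X →L[ℂ] X) = (L - H) c := fun c => by
      rw [LinearMap.sub_apply, hL', LinearMap.sub_apply]; rfl
    rw [derDefect, ← MulMemClass.coe_mul, h2, h2, h2, sub_sub, sub_eq_zero] at h1
    exact h1
  have hLDH : L = (L - H) + H := (sub_add_cancel L H).symm
  refine ⟨L - H, H, hD, hH, (isLieNDeriv_add_iff hn hD hH).mp (hLDH ▸ hL), hLDH, fun hc => ?_⟩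
  have hHc : Continuous H := by
    let R : ↥(nestAlgebra 𝒩) := ⟨rankOne x₀ f₀, h𝒩.rankOne_mem hN hx₀ hf₀⟩
    have hφ : ∀ a : ↥(nestAlgebra 𝒩), φ a =
        k₀ (L a x₀ - L (a * R) v₀ + (a : X →L[ℂ] X) (L' (rankOne x₀ f₀) v₀)) := fun a => by
      rw [← hL', ← hL', MulMemClass.coe_mul, mul_rankOne]; rfl
    have : Continuous fun a : ↥(nestAlgebra 𝒩) => φ a • (1 : X →L[ℂ] X) := by
      simp only [hφ]
      fun_prop
    exact this
  exact ⟨hc.sub hHc, hHc⟩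

end CommPoly

/-- Let `X` be a complex Banach space, `𝒩` a non-trivial nest on `X`,
and `n ≥ 2`. A linear map `L : Alg 𝒩 → B(X)` is a Lie `n`-derivation if and only if
there exist a derivation `D : Alg 𝒩 → B(X)` and a linear map `H : Alg 𝒩 → ℂI` vanishing
on every `(n-1)`-th commutator such that `L = D + H`; moreover, if `L` is continuous
then `D` and `H` can be chosen continuous. -/
theorem statement0 {X : Type*} [NormedAddCommGroup X] [NormedSpace ℂ X] [CompleteSpace X]
    (𝒩 : Set (Submodule ℂ X)) (hnest : IsNest 𝒩)
    (hnontrivial : 𝒩 ≠ ({⊥, ⊤} : Set (Submodule ℂ X)))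
    (n : ℕ) (hn : 2 ≤ n)
    (L : ↥(nestAlgebra 𝒩) →ₗ[ℂ] (X →L[ℂ] X)) :
    (IsLieNDeriv (nestAlgebra 𝒩) n L ↔
      ∃ D H : ↥(nestAlgebra 𝒩) →ₗ[ℂ] (X →L[ℂ] X),
        IsDerivOn (nestAlgebra 𝒩) D ∧
        (∀ a : ↥(nestAlgebra 𝒩), ∃ c : ℂ, H a = c • (1 : X →L[ℂ] X)) ∧
        (∀ a : Fin n → ↥(nestAlgebra 𝒩), H (commPoly n a) = 0) ∧
        L = D + H) ∧
    (IsLieNDeriv (nestAlgebra 𝒩) n L → Continuous L →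
      ∃ D H : ↥(nestAlgebra 𝒩) →ₗ[ℂ] (X →L[ℂ] X),
        IsDerivOn (nestAlgebra 𝒩) D ∧
        (∀ a : ↥(nestAlgebra 𝒩), ∃ c : ℂ, H a = c • (1 : X →L[ℂ] X)) ∧
        (∀ a : Fin n → ↥(nestAlgebra 𝒩), H (commPoly n a) = 0) ∧
        L = D + H ∧ Continuous D ∧ Continuous H) := by
  refine ⟨⟨fun hL => ?_, ?_⟩, fun hL hc => ?_⟩
  · obtain ⟨D, H, hD, hH, hH0, hLDH, -⟩ := hnest.exists_isDerivOn hnontrivial hn hL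
    exact ⟨D, H, hD, hH, hH0, hLDH⟩
  · rintro ⟨D, H, hD, hH, hH0, rfl⟩
    exact (isLieNDeriv_add_iff hn hD hH).mpr hH0
  · obtain ⟨D, H, hD, hH, hH0, hLDH, hcont⟩ := hnest.exists_isDerivOn hnontrivial hn hL
    exact ⟨D, H, hD, hH, hH0, hLDH, (hcont hc).1, (hcont hc).2⟩
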